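/- For every n ≥ 2 and m ≥ 0 there exist k-algebra isomorphisms R^{Λ₁}_{B_n}(m) ≅ R^{Λ₁}_{D_{n+1}}(m) ≅ R^{Λ₂}_{D_{n+1}}(m) between the corresponding cyclotomic quiver Hecke algebras of types B_n and D_{n+1}. -/

import Mathlib

open scoped Classical

namespace QHA

variable (k : Type) [Field k]

/-- Generators of the quiver Hecke algebra `R(β)` on `m` strands with vertex set
`Fin n`: the idempotents `e(ν)`, the polynomial generators `x_p` and the
intertwiners `τ_j` (acting on strands `j`, `j+1`, 0-based). -/
inductive Gen (n m : ℕ) : Type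
  | e (ν : Fin m → Fin n) : Gen n m
  | x (p : Fin m) : Gen n m
  | t (j : ℕ) (h : j + 1 < m) : Gen n m

/-- The free algebra on the generators. -/
abbrev FA (n m : ℕ) := FreeAlgebra k (Gen n m)

variable {n m : ℕ}

noncomputable def Eg (ν : Fin m → Fin n) : FA k n m := FreeAlgebra.ι k (Gen.e ν)
noncomputable def Xg (p : Fin m) : FA k n m := FreeAlgebra.ι k (Gen.x p)
noncomputable def Tg (j : ℕ) (h : j + 1 < m) : FA k n m := FreeAlgebra.ι k (Gen.t j h)

/-- The transposition of the strands `j`, `j+1` (0-based). -/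
def posSwap (j : ℕ) (h : j + 1 < m) : Equiv.Perm (Fin m) :=
  Equiv.swap ⟨j, Nat.lt_of_succ_lt h⟩ ⟨j + 1, h⟩

/-- The place-permutation `s_j ν` of a sequence `ν`. -/
def swapSeq (j : ℕ) (h : j + 1 < m) (ν : Fin m → Fin n) : Fin m → Fin n :=
  ν ∘ posSwap j h

/-- Evaluation of a two-variable polynomial `p(u,v)` at two elements of a
(possibly noncommutative) `k`-algebra, as `Σ t_{p,q} a^p b^q`. -/
noncomputable def eval2 {A : Type} [Ring A] [Algebra k A]
    (p : MvPolynomial (Fin 2) k) (a b : A) : A :=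
  ∑ d ∈ p.support, algebraMap k A (MvPolynomial.coeff d p) * (a ^ d 0 * b ^ d 1)

/-- Evaluation of a three-variable polynomial. -/
noncomputable def eval3 {A : Type} [Ring A] [Algebra k A]
    (p : MvPolynomial (Fin 3) k) (a b c : A) : A :=
  ∑ d ∈ p.support, algebraMap k A (MvPolynomial.coeff d p) * (a ^ d 0 * b ^ d 1 * c ^ d 2)

/-- For `p = Q(u,v)`, the polynomial `(Q(u,v) - Q(w,v))/(u - w)` in the three
variables `u = X 0`, `v = X 1`, `w = X 2` (exact division by the monic `u - w`). -/
noncomputable def Qbar (p : MvPolynomial (Fin 2) k) : MvPolynomial (Fin 3) k :=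
  (MvPolynomial.finSuccEquiv k 2).symm
    (Polynomial.divByMonic
      ((MvPolynomial.finSuccEquiv k 2)
        (MvPolynomial.rename (fun i : Fin 2 => if i = 0 then (0 : Fin 3) else 1) p -
          MvPolynomial.rename (fun i : Fin 2 => if i = 0 then (2 : Fin 3) else 1) p))
      (Polynomial.X - Polynomial.C (MvPolynomial.X 1)))

/-- Admissibility of the family `Q_{i,j}(u,v)` of polynomials with respect to the
(symmetrizable) Cartan matrix `A` and symmetrizing integers `d`
(so `(α_i, α_j) = d_i A_{i j}`):
`Q_{i,i} = 0`; `Q_{j,i}(u,v) = Q_{i,j}(v,u)`; `Q_{i,j} = 1` whenever `(α_i,α_j) = 0`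
(`i ≠ j`); `Q_{i,j}` is supported on `(p,q)` with
`(α_i,α_i) p + (α_j,α_j) q = -2(α_i,α_j)`; and `t_{i,j;-a_{ij},0} ≠ 0`. -/
def QAdmissible (A : Fin n → Fin n → ℤ) (d : Fin n → ℤ)
    (Q : Fin n → Fin n → MvPolynomial (Fin 2) k) : Prop :=
  (∀ i, Q i i = 0) ∧
  (∀ i j, Q j i = MvPolynomial.rename (Equiv.swap (0 : Fin 2) 1) (Q i j)) ∧
  (∀ i j, i ≠ j → d i * A i j = 0 → Q i j = 1) ∧
  (∀ i j, i ≠ j → ∀ dd ∈ (Q i j).support,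
    (2 * d i) * (dd 0 : ℤ) + (2 * d j) * (dd 1 : ℤ) = -2 * (d i * A i j)) ∧
  (∀ i j, i ≠ j →
    MvPolynomial.coeff (Finsupp.single (0 : Fin 2) (-(A i j)).toNat) (Q i j) ≠ 0)

/-- The defining relations of the quiver Hecke algebra `R(β)`, where
`S ⊆ I^m` is the set of admissible sequences (`I^β`; `e(ν) = 0` for `ν ∉ S`). -/
inductive Rel (Q : Fin n → Fin n → MvPolynomial (Fin 2) k) (S : Set (Fin m → Fin n)) :
    FA k n m → FA k n m → Prop
  | e_orth (ν ν' : Fin m → Fin n) (hne : ν ≠ ν') : Rel Q S (Eg k ν * Eg k ν') 0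
  | e_idem (ν : Fin m → Fin n) : Rel Q S (Eg k ν * Eg k ν) (Eg k ν)
  | e_sum : Rel Q S (∑ ν : Fin m → Fin n, Eg k ν) 1
  | e_out (ν : Fin m → Fin n) (hν : ν ∉ S) : Rel Q S (Eg k ν) 0
  | xx (p q : Fin m) : Rel Q S (Xg k p * Xg k q) (Xg k q * Xg k p)
  | xe (p : Fin m) (ν : Fin m → Fin n) : Rel Q S (Xg k p * Eg k ν) (Eg k ν * Xg k p)
  | te (j : ℕ) (h : j + 1 < m) (ν : Fin m → Fin n) :
      Rel Q S (Tg k j h * Eg k ν) (Eg k (swapSeq j h ν) * Tg k j h)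
  | tt (a : ℕ) (ha : a + 1 < m) (b : ℕ) (hb : b + 1 < m) (hab : a + 1 < b ∨ b + 1 < a) :
      Rel Q S (Tg k a ha * Tg k b hb) (Tg k b hb * Tg k a ha)
  | tsq (j : ℕ) (h : j + 1 < m) (ν : Fin m → Fin n) :
      Rel Q S (Tg k j h * Tg k j h * Eg k ν)
        (eval2 k (Q (ν ⟨j, Nat.lt_of_succ_lt h⟩) (ν ⟨j + 1, h⟩))
          (Xg k ⟨j, Nat.lt_of_succ_lt h⟩) (Xg k ⟨j + 1, h⟩) * Eg k ν)
  | tx_left (j : ℕ) (h : j + 1 < m) (ν : Fin m → Fin n)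
      (hv : ν ⟨j, Nat.lt_of_succ_lt h⟩ = ν ⟨j + 1, h⟩) :
      Rel Q S (Tg k j h * Xg k ⟨j, Nat.lt_of_succ_lt h⟩ * Eg k ν)
        (Xg k ⟨j + 1, h⟩ * Tg k j h * Eg k ν - Eg k ν)
  | tx_right (j : ℕ) (h : j + 1 < m) (ν : Fin m → Fin n)
      (hv : ν ⟨j, Nat.lt_of_succ_lt h⟩ = ν ⟨j + 1, h⟩) :
      Rel Q S (Tg k j h * Xg k ⟨j + 1, h⟩ * Eg k ν)
        (Xg k ⟨j, Nat.lt_of_succ_lt h⟩ * Tg k j h * Eg k ν + Eg k ν)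
  | tx_comm (j : ℕ) (h : j + 1 < m) (ν : Fin m → Fin n) (p : Fin m)
      (hcase : ν ⟨j, Nat.lt_of_succ_lt h⟩ ≠ ν ⟨j + 1, h⟩ ∨ ((p : ℕ) ≠ j ∧ (p : ℕ) ≠ j + 1)) :
      Rel Q S (Tg k j h * Xg k p * Eg k ν) (Xg k (posSwap j h p) * Tg k j h * Eg k ν)
  | braid_ne (j : ℕ) (h1 : j + 1 < m) (h2 : j + 2 < m) (ν : Fin m → Fin n)
      (hv : ν ⟨j, by omega⟩ ≠ ν ⟨j + 2, h2⟩) :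
      Rel Q S
        (Tg k (j + 1) (by omega) * Tg k j h1 * Tg k (j + 1) (by omega) * Eg k ν)
        (Tg k j h1 * Tg k (j + 1) (by omega) * Tg k j h1 * Eg k ν)
  | braid_eq (j : ℕ) (h1 : j + 1 < m) (h2 : j + 2 < m) (ν : Fin m → Fin n)
      (hv : ν ⟨j, by omega⟩ = ν ⟨j + 2, h2⟩) :
      Rel Q S
        (Tg k (j + 1) (by omega) * Tg k j h1 * Tg k (j + 1) (by omega) * Eg k ν)
        (Tg k j h1 * Tg k (j + 1) (by omega) * Tg k j h1 * Eg k ν +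
          eval3 k (Qbar k (Q (ν ⟨j, by omega⟩) (ν ⟨j + 1, h1⟩)))
            (Xg k ⟨j, by omega⟩) (Xg k ⟨j + 1, h1⟩) (Xg k ⟨j + 2, h2⟩) * Eg k ν)

/-- The extra cyclotomic relations `x_m^{⟨h_{ν_m}, Λ⟩} e(ν) = 0` (`ν ∈ I^β`),
where `Λ` is written in fundamental-weight coordinates, so `⟨h_i, Λ⟩ = Λ i`. -/
inductive CycRel (Λ : Fin n → ℤ) (S : Set (Fin m → Fin n)) :
    FA k n m → FA k n m → Prop
  | cyc (ν : Fin m → Fin n) (hν : ν ∈ S) (p : Fin m) (hp : (p : ℕ) + 1 = m) :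
      CycRel Λ S (Xg k p ^ (Λ (ν p)).toNat * Eg k ν) 0

/-- Relations of the cyclotomic quiver Hecke algebra `R^Λ(β)`. -/
def CRel (Q : Fin n → Fin n → MvPolynomial (Fin 2) k) (S : Set (Fin m → Fin n))
    (Λ : Fin n → ℤ) : FA k n m → FA k n m → Prop :=
  fun a b => Rel k Q S a b ∨ CycRel k Λ S a b

/-- The `j`-th column of the Cartan matrix: the simple root `α_j` written in
fundamental-weight coordinates (`⟨h_i, α_j⟩ = A i j`). -/
def αcol (A : Fin n → Fin n → ℤ) (j : Fin n) : Fin n → ℤ := fun i => A i j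

/-- `FPath A Λ [i₁, …, i_ℓ] ξ` means `f̃_{i₁} ⋯ f̃_{i_ℓ} Λ = ξ` in the
minuscule crystal realized on the Weyl orbit of `Λ`:
`f̃_j μ = μ - α_j` whenever `⟨h_j, μ⟩ = 1` (and is undefined otherwise). -/
inductive FPath (A : Fin n → Fin n → ℤ) (Λ : Fin n → ℤ) :
    List (Fin n) → (Fin n → ℤ) → Prop
  | nil : FPath A Λ [] Λ
  | cons (j : Fin n) (l : List (Fin n)) (ξ : Fin n → ℤ) :
      FPath A Λ l ξ → ξ j = 1 → FPath A Λ (j :: l) (ξ - αcol A j)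

/-- The simple reflection `s_j μ = μ - ⟨h_j, μ⟩ α_j` on the weight lattice. -/
def sRef (A : Fin n → Fin n → ℤ) (j : Fin n) (μ : Fin n → ℤ) : Fin n → ℤ :=
  fun i => μ i - μ j * A i j

/-- The Weyl group orbit of `Λ` (the Weyl group being generated by the
involutions `s_j`, its orbit consists of images under words in the `s_j`). -/
def orbitW (A : Fin n → Fin n → ℤ) (Λ : Fin n → ℤ) : Set (Fin n → ℤ) :=
  {ξ | ∃ l : List (Fin n), l.foldr (sRef A) Λ = ξ}

end QHA

namespace QHA

/-- The Cartan matrix of type `Bₙ` (0-based labeling; the first node carries the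
short simple root: `a_{1,2} = -2`, `a_{2,1} = -1` in 1-based labels, and
`1 — 2 — ⋯ — n` is a chain). -/
def AB (n : ℕ) : Fin n → Fin n → ℤ := fun i j =>
  if i = j then 2
  else if (i : ℕ) = 0 ∧ (j : ℕ) = 1 then -2
  else if (i : ℕ) + 1 = (j : ℕ) ∨ (j : ℕ) + 1 = (i : ℕ) then -1
  else 0

/-- The symmetrizing integers of type `Bₙ`: `d₁ = 1` and `d_i = 2` for `i ≥ 2`. -/
def dB (n : ℕ) : Fin n → ℤ := fun i => if (i : ℕ) = 0 then 1 else 2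

/-- The Cartan matrix of type `D_n` (0-based labeling: the nodes `0` and `1` are
the two end nodes, both joined to the node `2`, and `2 — 3 — ⋯ — (n-1)` is a chain). -/
def AD (n : ℕ) : Fin n → Fin n → ℤ := fun i j =>
  if i = j then 2
  else if ((i : ℕ) = 0 ∧ (j : ℕ) = 2) ∨ ((i : ℕ) = 2 ∧ (j : ℕ) = 0) then -1
  else if ((i : ℕ) = 1 ∧ (j : ℕ) = 2) ∨ ((i : ℕ) = 2 ∧ (j : ℕ) = 1) then -1
  else if (2 ≤ (i : ℕ) ∧ 2 ≤ (j : ℕ)) ∧ ((i : ℕ) + 1 = (j : ℕ) ∨ (j : ℕ) + 1 = (i : ℕ))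
    then -1
  else 0

/-! For a minuscule weight `Λ` the cyclotomic quotient is so small that only the combinatorics of
the crystal of `Λ` survives in it. All the `x p` vanish, and `e ν = 0` unless the word `ν` spells a
path from `Λ` in the crystal. On path words the quadratic relation then reads `τ j ^ 2 = 1` when
the letters at `j` and `j + 1` are orthogonal, `τ j` kills `e ν` when they are not, and the error
term of the braid relation vanishes. So the quotient is presented by orthogonal idempotents indexed
by path words together with elements `τ j` that exchange orthogonal neighbours and satisfy the
Coxeter relations; this presentation depends only on the set of path words and on which of them
are related by an admissible swap.

Folding the diagram of type `D (n + 1)` along its symmetry, so that the end nodes `0` and `1` become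
the node `0` of type `B n`, transports one presentation to the other. A weight of a half-spin
representation vanishes on one of the two end nodes, so at every step of a path at most one of them
can be used: hence a path word of type `B` lifts uniquely once the half-spin weight is chosen. -/

section Swap

variable {m : ℕ}

theorem posSwap_right (j : ℕ) (h : j + 1 < m) :
    posSwap j h ⟨j + 1, h⟩ = ⟨j, Nat.lt_of_succ_lt h⟩ :=
  Equiv.swap_apply_right _ _

theorem posSwap_of_ne {j : ℕ} (h : j + 1 < m) {q : Fin m} (hj : (q : ℕ) ≠ j)
    (hj' : (q : ℕ) ≠ j + 1) : posSwap j h q = q :=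
  Equiv.swap_apply_of_ne_of_ne (Fin.ne_of_val_ne hj) (Fin.ne_of_val_ne hj')

theorem eq_or_eq_succ_or_ne {j : ℕ} (h : j + 1 < m) (q : Fin m) :
    q = ⟨j, Nat.lt_of_succ_lt h⟩ ∨ q = ⟨j + 1, h⟩ ∨ (q : ℕ) ≠ j ∧ (q : ℕ) ≠ j + 1 := by
  simp only [Fin.ext_iff]
  omega

theorem le_posSwap_iff {j p : ℕ} (h : j + 1 < m) (hp : p ≠ j + 1) (q : Fin m) :
    p ≤ (posSwap j h q : ℕ) ↔ p ≤ (q : ℕ) := by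
  rcases eq_or_eq_succ_or_ne h q with rfl | rfl | ⟨hj, hj'⟩
  · rw [posSwap, Equiv.swap_apply_left]
    dsimp only
    omega
  · rw [posSwap_right]
    dsimp only
    omega
  · rw [posSwap_of_ne h hj hj']

variable {n : ℕ}

theorem swapSeq_left {j : ℕ} (h : j + 1 < m) (ν : Fin m → Fin n) :
    swapSeq j h ν ⟨j, Nat.lt_of_succ_lt h⟩ = ν ⟨j + 1, h⟩ :=
  congrArg ν (Equiv.swap_apply_left _ _)

theorem swapSeq_right {j : ℕ} (h : j + 1 < m) (ν : Fin m → Fin n) :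
    swapSeq j h ν ⟨j + 1, h⟩ = ν ⟨j, Nat.lt_of_succ_lt h⟩ :=
  congrArg ν (Equiv.swap_apply_right _ _)

theorem swapSeq_of_ne {j : ℕ} (h : j + 1 < m) (ν : Fin m → Fin n) {q : Fin m} (hj : (q : ℕ) ≠ j)
    (hj' : (q : ℕ) ≠ j + 1) : swapSeq j h ν q = ν q :=
  congrArg ν (posSwap_of_ne h hj hj')

theorem swapSeq_swapSeq {j : ℕ} (h : j + 1 < m) (ν : Fin m → Fin n) :
    swapSeq j h (swapSeq j h ν) = ν := by
  funext q
  simp [swapSeq, posSwap]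

theorem swapSeq_eq_self {j : ℕ} (h : j + 1 < m) {ν : Fin m → Fin n}
    (hν : ν ⟨j, Nat.lt_of_succ_lt h⟩ = ν ⟨j + 1, h⟩) : swapSeq j h ν = ν := by
  funext q
  rcases eq_or_eq_succ_or_ne h q with rfl | rfl | ⟨hj, hj'⟩
  · rw [swapSeq_left, hν]
  · rw [swapSeq_right, hν]
  · exact swapSeq_of_ne h ν hj hj'

end Swap

/-! ### Path words in the minuscule crystal -/

/-- A symmetrizable generalized Cartan matrix `A` with symmetrizing integers `d` in which every
edge carries an entry `-1` on at least one side; all Cartan matrices of finite type are of this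
kind. -/
structure IsCartanDatum {n : ℕ} (A : Fin n → Fin n → ℤ) (d : Fin n → ℤ) : Prop where
  diag (i : Fin n) : A i i = 2
  nonpos {i j : Fin n} : i ≠ j → A i j ≤ 0
  pos (i : Fin n) : 0 < d i
  symm (i j : Fin n) : d i * A i j = d j * A j i
  eq_neg_one_or {i j : Fin n} : A i j < 0 → A i j = -1 ∨ A j i = -1

/-- A dominant weight `Λ` is minuscule when the pairings of all weights of its crystal with the
simple coroots lie in `{-1, 0, 1}`. -/
structure IsMinuscule {n : ℕ} (A : Fin n → Fin n → ℤ) (Λ : Fin n → ℤ) : Prop where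
  dominant (i : Fin n) : 0 ≤ Λ i
  bounded {l : List (Fin n)} {ξ : Fin n → ℤ} : FPath A Λ l ξ → ∀ i, -1 ≤ ξ i ∧ ξ i ≤ 1

/-- The weight reached from `Λ` by applying the lowering operators at the positions `≥ p` of the
word `ν`; the last letter acts first, as in `FPath`. -/
noncomputable def weight {n m : ℕ} (A : Fin n → Fin n → ℤ) (Λ : Fin n → ℤ) (ν : Fin m → Fin n)
    (p : ℕ) : Fin n → ℤ :=
  Λ - ∑ q ∈ Finset.univ.filter (fun q : Fin m => p ≤ (q : ℕ)), αcol A (ν q)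

/-- The letters of `ν` at the positions `≥ p` spell a path from `Λ` in the minuscule crystal. -/
def IsPathFrom {n m : ℕ} (A : Fin n → Fin n → ℤ) (Λ : Fin n → ℤ) (ν : Fin m → Fin n) (p : ℕ) :
    Prop :=
  ∀ q : Fin m, p ≤ (q : ℕ) → weight A Λ ν (q + 1) (ν q) = 1

/-- The words of length `m` spelling a path from `Λ` in the minuscule crystal. They index the
nonzero idempotents `e(ν)` of the cyclotomic quotient. -/
abbrev PathWord {n : ℕ} (A : Fin n → Fin n → ℤ) (Λ : Fin n → ℤ) (m : ℕ) : Type :=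
  {ν : Fin m → Fin n // IsPathFrom A Λ ν 0}

/-- Two path words are `j`-adjacent when they differ by the transposition of their letters at the
positions `j` and `j + 1`. -/
def PathWord.Adj {n m : ℕ} {A : Fin n → Fin n → ℤ} {Λ : Fin n → ℤ} (j : ℕ) (h : j + 1 < m)
    (ν ν' : PathWord A Λ m) : Prop :=
  ν'.1 = swapSeq j h ν.1

section Path

variable {n m : ℕ} {A : Fin n → Fin n → ℤ} {d Λ : Fin n → ℤ}

theorem IsCartanDatum.eq_zero_comm (hA : IsCartanDatum A d) (i j : Fin n) :
    A i j = 0 ↔ A j i = 0 := by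
  have hs := hA.symm i j
  constructor <;> intro h0 <;> rw [h0, mul_zero] at hs
  · exact (mul_eq_zero.1 hs.symm).resolve_left (hA.pos j).ne'
  · exact (mul_eq_zero.1 hs).resolve_left (hA.pos i).ne'

theorem IsCartanDatum.trichotomy (hA : IsCartanDatum A d) (i j : Fin n) :
    i = j ∨ A i j = 0 ∨ A i j < 0 := by
  by_cases hij : i = j
  · exact .inl hij
  · exact .inr (hA.nonpos hij).eq_or_lt

theorem IsCartanDatum.neg_comm (hA : IsCartanDatum A d) {i j : Fin n} (h : A i j < 0) :
    A j i < 0 := by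
  have hij : j ≠ i := by
    rintro rfl
    have := hA.diag j
    omega
  exact (hA.nonpos hij).lt_of_ne fun h0 => h.ne ((hA.eq_zero_comm j i).1 h0)

theorem weight_of_le (ν : Fin m → Fin n) {p : ℕ} (hp : m ≤ p) : weight A Λ ν p = Λ := by
  rw [weight, Finset.filter_false_of_mem (fun q _ => by omega), Finset.sum_empty, sub_zero]

theorem weight_eq_sub (ν : Fin m → Fin n) {p : ℕ} (hp : p < m) :
    weight A Λ ν p = weight A Λ ν (p + 1) - αcol A (ν ⟨p, hp⟩) := by
  have hfilter : (Finset.univ.filter fun q : Fin m => p ≤ (q : ℕ)) =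
      insert ⟨p, hp⟩ (Finset.univ.filter fun q : Fin m => p + 1 ≤ (q : ℕ)) := by
    ext q
    simp only [Finset.mem_filter, Finset.mem_univ, true_and, Finset.mem_insert, Fin.ext_iff]
    omega
  rw [weight, weight, hfilter, Finset.sum_insert (by simp)]
  abel

theorem weight_apply_eq_sub (ν : Fin m → Fin n) {p : ℕ} (hp : p < m) (i : Fin n) :
    weight A Λ ν p i = weight A Λ ν (p + 1) i - A i (ν ⟨p, hp⟩) :=
  congrFun (weight_eq_sub ν hp) i

theorem weight_congr {ν ν' : Fin m → Fin n} {p : ℕ} (h : ∀ q : Fin m, p ≤ (q : ℕ) → ν q = ν' q) :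
    weight A Λ ν p = weight A Λ ν' p := by
  rw [weight, weight, Finset.sum_congr rfl fun q hq => by rw [h q (Finset.mem_filter.1 hq).2]]

theorem weight_swapSeq {j p : ℕ} (h : j + 1 < m) (ν : Fin m → Fin n) (hp : p ≠ j + 1) :
    weight A Λ (swapSeq j h ν) p = weight A Λ ν p := by
  rw [weight, weight, Finset.sum_equiv (posSwap j h) (g := fun q => αcol A (ν q))]
  · simp [le_posSwap_iff h hp]
  · simp [swapSeq]

theorem IsPathFrom.congr {ν ν' : Fin m → Fin n} {p : ℕ} (hν : IsPathFrom A Λ ν p)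
    (h : ∀ q : Fin m, p ≤ (q : ℕ) → ν q = ν' q) : IsPathFrom A Λ ν' p := by
  intro q hq
  rw [← h q hq, ← weight_congr fun r hr => h r (by omega)]
  exact hν q hq

theorem IsPathFrom.mono {ν : Fin m → Fin n} {p p' : ℕ} (hν : IsPathFrom A Λ ν p) (h : p ≤ p') :
    IsPathFrom A Λ ν p' :=
  fun q hq => hν q (h.trans hq)

theorem isPathFrom_of_le (ν : Fin m → Fin n) {p : ℕ} (hp : m ≤ p) : IsPathFrom A Λ ν p :=
  fun q hq => absurd q.isLt (by omega)

theorem isPathFrom_iff_succ {ν : Fin m → Fin n} {p : ℕ} (hp : p < m) :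
    IsPathFrom A Λ ν p ↔ IsPathFrom A Λ ν (p + 1) ∧ weight A Λ ν (p + 1) (ν ⟨p, hp⟩) = 1 := by
  refine ⟨fun hν => ⟨hν.mono p.le_succ, hν ⟨p, hp⟩ le_rfl⟩, fun ⟨hν, hw⟩ q hq => ?_⟩
  rcases hq.eq_or_lt with hpq | hpq
  · obtain rfl : q = ⟨p, hp⟩ := Fin.ext hpq.symm
    exact hw
  · exact hν q hpq

theorem IsPathFrom.exists_fPath {ν : Fin m → Fin n} {p : ℕ} (hp : p ≤ m) :
    IsPathFrom A Λ ν p → ∃ l, FPath A Λ l (weight A Λ ν p) := by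
  induction hp using Nat.decreasingInduction with
  | self =>
    rw [weight_of_le ν le_rfl]
    exact fun _ => ⟨[], .nil⟩
  | of_succ p hp ih =>
    intro hν
    obtain ⟨hν', hw⟩ := (isPathFrom_iff_succ hp).1 hν
    obtain ⟨l, hl⟩ := ih hν'
    rw [weight_eq_sub ν hp]
    exact ⟨_, .cons _ l _ hl hw⟩

theorem IsMinuscule.weight_bounded (hΛ : IsMinuscule A Λ) {ν : Fin m → Fin n} {p : ℕ} (hp : p ≤ m)
    (hν : IsPathFrom A Λ ν p) (i : Fin n) : -1 ≤ weight A Λ ν p i ∧ weight A Λ ν p i ≤ 1 :=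
  let ⟨_, hl⟩ := hν.exists_fPath hp
  hΛ.bounded hl i

theorem IsPathFrom.ne_succ (hA : IsCartanDatum A d) {ν : Fin m → Fin n} {j p : ℕ} (h : j + 1 < m)
    (hp : p ≤ j) (hν : IsPathFrom A Λ ν p) : ν ⟨j, Nat.lt_of_succ_lt h⟩ ≠ ν ⟨j + 1, h⟩ := by
  intro hj
  have hw := hν ⟨j, Nat.lt_of_succ_lt h⟩ hp
  have hw' := hν ⟨j + 1, h⟩ (hp.trans j.le_succ)
  rw [weight_apply_eq_sub ν h, hj, hA.diag] at hw
  dsimp only at hw'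
  omega

theorem IsPathFrom.swapSeq_iff (hA : IsCartanDatum A d) {ν : Fin m → Fin n} {j p : ℕ}
    (h : j + 1 < m) (hp : p ≤ j) (hν : IsPathFrom A Λ ν p) :
    IsPathFrom A Λ (swapSeq j h ν) p ↔ A (ν ⟨j, Nat.lt_of_succ_lt h⟩) (ν ⟨j + 1, h⟩) = 0 := by
  have hw : weight A Λ ν (j + 1) (ν ⟨j, Nat.lt_of_succ_lt h⟩) = 1 := hν ⟨j, _⟩ hp
  rw [weight_apply_eq_sub ν h] at hw
  constructor
  · intro hs
    have hw' := hs ⟨j + 1, h⟩ (hp.trans j.le_succ)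
    rw [swapSeq_right, weight_swapSeq h ν (by simp)] at hw'
    dsimp only at hw'
    omega
  · intro h0 q hq
    rcases eq_or_eq_succ_or_ne h q with rfl | rfl | ⟨hj, hj'⟩
    · rw [swapSeq_left, weight_apply_eq_sub _ h, weight_swapSeq h ν (by omega), swapSeq_right,
        (hA.eq_zero_comm _ _).1 h0, sub_zero]
      exact hν ⟨j + 1, h⟩ (hp.trans j.le_succ)
    · rw [swapSeq_right, weight_swapSeq h ν (by simp)]
      rwa [h0, sub_zero] at hw
    · rw [swapSeq_of_ne h ν hj hj', weight_swapSeq h ν (by omega)]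
      exact hν q hq

theorem IsPathFrom.apply_eq_neg_two (hA : IsCartanDatum A d) {ν : Fin m → Fin n} {j : ℕ}
    (h : j + 2 < m) (hν : IsPathFrom A Λ ν 0) (hj : ν ⟨j, by omega⟩ = ν ⟨j + 2, h⟩) :
    A (ν ⟨j, by omega⟩) (ν ⟨j + 1, by omega⟩) = -2 := by
  have hw := hν ⟨j, by omega⟩ j.zero_le
  have hw' := hν ⟨j + 2, h⟩ (j + 2).zero_le
  rw [weight_apply_eq_sub ν (by omega : j + 1 < m), weight_apply_eq_sub ν h, ← hj, hA.diag] at hw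
  rw [← hj] at hw'
  dsimp only at hw'
  omega

theorem IsPathFrom.exists_of_weight_eq_neg_one (hA : IsCartanDatum A d) (hΛ : IsMinuscule A Λ)
    {ν : Fin m → Fin n} {i : Fin n} {p : ℕ} (hp : p ≤ m) :
    IsPathFrom A Λ ν p → weight A Λ ν p i = -1 → ∃ q : Fin m, p ≤ (q : ℕ) ∧ ν q = i ∧
      ∀ r : Fin m, p ≤ (r : ℕ) → r < q → A i (ν r) = 0 := by
  induction hp using Nat.decreasingInduction with
  | self =>
    intro _ hw
    rw [weight_of_le ν le_rfl] at hw
    have := hΛ.dominant i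
    omega
  | of_succ p hp ih =>
    intro hν hw
    by_cases hi : ν ⟨p, hp⟩ = i
    · exact ⟨⟨p, hp⟩, le_rfl, hi, fun r hr hr' => absurd hr' (Fin.not_lt.2 hr)⟩
    · have hν' := ((isPathFrom_iff_succ hp).1 hν).1
      have hbound := hΛ.weight_bounded (p := p + 1) hp hν' i
      have hnonpos := hA.nonpos (Ne.symm hi)
      rw [weight_apply_eq_sub ν hp] at hw
      obtain ⟨q, hq, hqi, hall⟩ := ih hν' (by omega)
      refine ⟨q, by omega, hqi, fun r hr hrq => ?_⟩
      rcases hr.eq_or_lt with hpr | hpr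
      · obtain rfl : r = ⟨p, hp⟩ := Fin.ext hpr.symm
        omega
      · exact hall r hpr hrq

end Path

/-! ### The polynomials `Q i j` -/

/-- Over a field, an admissible family for a matrix with a unit entry on each edge consists of
binomials: `Q i j (u, v) = a u ^ s + b v ^ t` with `s = -A i j`, `t = -A j i` and `a ≠ 0` when
`A i j < 0`. -/
structure IsBinomial {k : Type} [Field k] {n : ℕ} (A : Fin n → Fin n → ℤ)
    (Q : Fin n → Fin n → MvPolynomial (Fin 2) k) : Prop where
  diag (i : Fin n) : Q i i = 0
  eq_one {i j : Fin n} : A i j = 0 → Q i j = 1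
  eq_add {i j : Fin n} : A i j < 0 → ∃ a b : k, a ≠ 0 ∧
    Q i j = MvPolynomial.monomial (Finsupp.single 0 (-A i j).toNat) a +
      MvPolynomial.monomial (Finsupp.single 1 (-A j i).toNat) b

section Polynomials

open MvPolynomial

variable {k : Type} [Field k]

theorem eq_monomial_add_monomial {p : MvPolynomial (Fin 2) k} {s t : ℕ} (hs : s ≠ 0)
    (hp : ∀ c ∈ p.support, c 0 = s ∧ c 1 = 0 ∨ c 0 = 0 ∧ c 1 = t) :
    p = monomial (Finsupp.single 0 s) (coeff (Finsupp.single 0 s) p) +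
      monomial (Finsupp.single 1 t) (coeff (Finsupp.single 1 t) p) := by
  have hne : (Finsupp.single 0 s : Fin 2 →₀ ℕ) ≠ Finsupp.single 1 t := fun h =>
    hs (by simpa using DFunLike.congr_fun h 0)
  have hsupport : p.support ⊆ {Finsupp.single 0 s, Finsupp.single 1 t} := by
    intro c hc
    rw [Finset.mem_insert, Finset.mem_singleton]
    refine (hp c hc).imp (fun h => ?_) fun h => ?_ <;> ext i <;> fin_cases i <;> simp [h]
  conv_lhs => rw [p.as_sum]
  rw [Finset.sum_subset hsupport fun c _ hc => by rw [notMem_support_iff.1 hc, monomial_zero],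
    Finset.sum_pair hne]

theorem eq_or_eq_of_mul_add_mul_eq {a b : ℤ} (ha : 0 < a) (hb : 0 < b) {s t p q : ℕ}
    (hst : a * s = b * t) (hunit : s = 1 ∨ t = 1) (hpq : a * p + b * q = a * s) :
    p = s ∧ q = 0 ∨ p = 0 ∧ q = t := by
  have eq_of_mul_add {u p q : ℕ} (hu : 0 < u) (h : u * p + q = u) :
      p = 1 ∧ q = 0 ∨ p = 0 ∧ q = u := by
    rcases p with _ | _ | p
    · exact .inr ⟨rfl, by simpa using h⟩
    · exact .inl ⟨rfl, by simpa using h⟩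
    · nlinarith
  rcases hunit with rfl | rfl
  · obtain rfl : a = b * t := by simpa using hst
    refine eq_of_mul_add (by exact_mod_cast pos_of_mul_pos_right ha hb.le) ?_
    have : b * (t * p + q : ℤ) = b * t := by linear_combination hpq
    exact_mod_cast mul_left_cancel₀ hb.ne' this
  · obtain rfl : b = a * s := by simpa using hst.symm
    have : a * (s * q + p : ℤ) = a * s := by linear_combination hpq
    have := eq_of_mul_add (p := q) (q := p) (u := s)
      (by exact_mod_cast pos_of_mul_pos_right hb ha.le)
      (by exact_mod_cast mul_left_cancel₀ ha.ne' this)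
    tauto

theorem QAdmissible.isBinomial {n : ℕ} {A : Fin n → Fin n → ℤ} {d : Fin n → ℤ}
    (hA : IsCartanDatum A d) {Q : Fin n → Fin n → MvPolynomial (Fin 2) k}
    (hQ : QAdmissible k A d Q) : IsBinomial A Q := by
  obtain ⟨hdiag, -, hone, hsupport, hlead⟩ := hQ
  have hne {i j : Fin n} (h : A i j ≤ 0) : i ≠ j := by
    rintro rfl
    rw [hA.diag] at h
    omega
  refine ⟨hdiag, fun h => hone _ _ (hne h.le) (by rw [h, mul_zero]), fun {i j} h => ?_⟩
  have hs : ((-A i j).toNat : ℤ) = -A i j := Int.toNat_of_nonneg (by omega)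
  have ht : ((-A j i).toNat : ℤ) = -A j i :=
    Int.toNat_of_nonneg (by have := hA.neg_comm h; omega)
  refine ⟨_, _, hlead i j (hne h.le), eq_monomial_add_monomial (by omega) fun c hc => ?_⟩
  have hc := hsupport i j (hne h.le) c hc
  refine eq_or_eq_of_mul_add_mul_eq (hA.pos i) (hA.pos j) ?_ ?_ ?_
  · rw [hs, ht, mul_neg, mul_neg, hA.symm]
  · have := hA.eq_neg_one_or h
    omega
  · rw [hs]
    linarith

section Eval

variable {R : Type} [Ring R] [Algebra k R]

theorem eval2_add (p q : MvPolynomial (Fin 2) k) (x y : R) :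
    eval2 k (p + q) x y = eval2 k p x y + eval2 k q x y :=
  Finsupp.sum_add_index' (f := AddMonoidAlgebra.coeff p) (g := AddMonoidAlgebra.coeff q)
    (h := fun (c : Fin 2 →₀ ℕ) r => algebraMap k R r * (x ^ c 0 * y ^ c 1)) (by simp)
    (by simp [add_mul])

theorem eval2_monomial (c : Fin 2 →₀ ℕ) (r : k) (x y : R) :
    eval2 k (monomial c r) x y = r • (x ^ c 0 * y ^ c 1) := by
  rw [Algebra.smul_def]
  exact Finsupp.sum_single_index
    (h := fun (c : Fin 2 →₀ ℕ) r => algebraMap k R r * (x ^ c 0 * y ^ c 1)) (by simp)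

theorem eval2_zero (x y : R) : eval2 k 0 x y = 0 := by
  simp [eval2]

theorem eval2_one (x y : R) : eval2 k 1 x y = 1 := by
  simpa using eval2_monomial 0 (1 : k) x y

theorem eval3_add (p q : MvPolynomial (Fin 3) k) (x y z : R) :
    eval3 k (p + q) x y z = eval3 k p x y z + eval3 k q x y z :=
  Finsupp.sum_add_index' (f := AddMonoidAlgebra.coeff p) (g := AddMonoidAlgebra.coeff q)
    (h := fun (c : Fin 3 →₀ ℕ) r => algebraMap k R r * (x ^ c 0 * y ^ c 1 * z ^ c 2)) (by simp)
    (by simp [add_mul])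

theorem eval3_monomial (c : Fin 3 →₀ ℕ) (r : k) (x y z : R) :
    eval3 k (monomial c r) x y z = r • (x ^ c 0 * y ^ c 1 * z ^ c 2) := by
  rw [Algebra.smul_def]
  exact Finsupp.sum_single_index
    (h := fun (c : Fin 3 →₀ ℕ) r => algebraMap k R r * (x ^ c 0 * y ^ c 1 * z ^ c 2)) (by simp)

theorem eval3_sum {ι : Type} (s : Finset ι) (p : ι → MvPolynomial (Fin 3) k) (x y z : R) :
    eval3 k (∑ i ∈ s, p i) x y z = ∑ i ∈ s, eval3 k (p i) x y z :=
  map_sum (AddMonoidHom.mk' (fun p => eval3 k p x y z) fun p q => eval3_add p q x y z) p s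

variable {S : Type} [Ring S] [Algebra k S]

theorem map_eval2 (f : R →ₐ[k] S) (p : MvPolynomial (Fin 2) k) (x y : R) :
    f (eval2 k p x y) = eval2 k p (f x) (f y) := by
  simp [eval2, map_sum]

theorem map_eval3 (f : R →ₐ[k] S) (p : MvPolynomial (Fin 3) k) (x y z : R) :
    f (eval3 k p x y z) = eval3 k p (f x) (f y) (f z) := by
  simp [eval3, map_sum]

end Eval

theorem Qbar_eq_of_sub_eq_mul {p : MvPolynomial (Fin 2) k} {g : MvPolynomial (Fin 3) k}
    (h : rename (fun i : Fin 2 => if i = 0 then (0 : Fin 3) else 1) p -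
        rename (fun i : Fin 2 => if i = 0 then (2 : Fin 3) else 1) p = (X 0 - X 2) * g) :
    Qbar k p = g := by
  have hdivisor : finSuccEquiv k 2 (X 0 - X 2) = Polynomial.X - Polynomial.C (X 1) := by
    rw [map_sub, finSuccEquiv_X_zero]
    exact congrArg _ (finSuccEquiv_X_succ (j := (1 : Fin 2)))
  rw [Qbar, h, map_mul, hdivisor,
    Polynomial.mul_divByMonic_cancel_left _ (Polynomial.monic_X_sub_C _), AlgEquiv.symm_apply_apply]

theorem Qbar_monomial_add_monomial (s t : ℕ) (a b : k) :
    Qbar k (monomial (Finsupp.single 0 s) a + monomial (Finsupp.single 1 t) b) =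
      ∑ i ∈ Finset.range s,
        monomial (Finsupp.single (0 : Fin 3) i + Finsupp.single 2 (s - 1 - i)) a := by
  refine Qbar_eq_of_sub_eq_mul ?_
  have hsum : ∑ i ∈ Finset.range s,
      monomial (Finsupp.single (0 : Fin 3) i + Finsupp.single 2 (s - 1 - i)) a =
      C a * ∑ i ∈ Finset.range s, X 0 ^ i * X 2 ^ (s - 1 - i) := by
    rw [Finset.mul_sum]
    refine Finset.sum_congr rfl fun i _ => ?_
    rw [X_pow_eq_monomial, X_pow_eq_monomial, monomial_mul, C_mul_monomial, mul_one, mul_one]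
  rw [hsum, mul_left_comm, (Commute.all _ _).mul_geom_sum₂, ← C_mul_X_pow_eq_monomial,
    ← C_mul_X_pow_eq_monomial]
  simp only [map_add, map_mul, map_pow, algHom_C, algebraMap_eq, rename_X, if_true,
    one_ne_zero, if_false]
  ring

theorem eval3_Qbar_monomial_add_monomial {R : Type} [Ring R] [Algebra k R] (s t : ℕ) (a b : k)
    (x y z : R) :
    eval3 k (Qbar k (monomial (Finsupp.single 0 s) a + monomial (Finsupp.single 1 t) b)) x y z =
      a • ∑ i ∈ Finset.range s, x ^ i * z ^ (s - 1 - i) := by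
  rw [Qbar_monomial_add_monomial, eval3_sum, Finset.smul_sum]
  simp [eval3_monomial]

theorem IsBinomial.eval2_zero_zero {n : ℕ} {A : Fin n → Fin n → ℤ} {d : Fin n → ℤ}
    {Q : Fin n → Fin n → MvPolynomial (Fin 2) k} {R : Type} [Ring R] [Algebra k R]
    (hQ : IsBinomial A Q) (hA : IsCartanDatum A d) {i j : Fin n} (h : A i j < 0) :
    eval2 k (Q i j) (0 : R) 0 = 0 := by
  obtain ⟨a, b, -, hab⟩ := hQ.eq_add h
  have := hA.neg_comm h
  rw [hab, eval2_add, eval2_monomial, eval2_monomial]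
  simp [zero_pow, h, this]

theorem IsBinomial.eval3_Qbar_zero {n : ℕ} {A : Fin n → Fin n → ℤ}
    {Q : Fin n → Fin n → MvPolynomial (Fin 2) k} {R : Type} [Ring R] [Algebra k R]
    (hQ : IsBinomial A Q) {i j : Fin n} (h : A i j = -2) :
    eval3 k (Qbar k (Q i j)) (0 : R) 0 0 = 0 := by
  obtain ⟨a, b, -, hab⟩ := hQ.eq_add (h.trans_lt (by norm_num))
  rw [hab, eval3_Qbar_monomial_add_monomial, h]
  simp [Finset.sum_range_succ]

end Polynomials

/-! ### Vanishing in the cyclotomic quotient -/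

/-- Elements `e ν`, `x p`, `τ j` of a `k`-algebra satisfying the consequences of the defining
relations of a cyclotomic quiver Hecke algebra that drive the vanishing argument, with the
polynomials `Q i j` expanded as binomials. -/
structure IsCyclotomicFamily (k : Type) [Field k] {n m : ℕ} {R : Type} [Ring R] [Algebra k R]
    (A : Fin n → Fin n → ℤ) (Λ : Fin n → ℤ) (e : (Fin m → Fin n) → R) (x : Fin m → R)
    (τ : (j : ℕ) → j + 1 < m → R) : Prop where
  completeOrthogonal : CompleteOrthogonalIdempotents e
  tau_mul_e (j : ℕ) (h : j + 1 < m) (ν : Fin m → Fin n) :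
    τ j h * e ν = e (swapSeq j h ν) * τ j h
  tau_comm {a b : ℕ} (ha : a + 1 < m) (hb : b + 1 < m) :
    a + 1 < b → τ a ha * τ b hb = τ b hb * τ a ha
  tau_comm_x {j : ℕ} (h : j + 1 < m) {p : Fin m} :
    (p : ℕ) ≠ j → (p : ℕ) ≠ j + 1 → Commute (τ j h) (x p)
  tau_mul_x_of_ne {j : ℕ} (h : j + 1 < m) {ν : Fin m → Fin n} (p : Fin m) :
    ν ⟨j, Nat.lt_of_succ_lt h⟩ ≠ ν ⟨j + 1, h⟩ →
      τ j h * x p * e ν = x (posSwap j h p) * τ j h * e ν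
  tau_mul_x_succ_of_eq {j : ℕ} (h : j + 1 < m) {ν : Fin m → Fin n} :
    ν ⟨j, Nat.lt_of_succ_lt h⟩ = ν ⟨j + 1, h⟩ →
      τ j h * x ⟨j + 1, h⟩ * e ν = x ⟨j, Nat.lt_of_succ_lt h⟩ * τ j h * e ν + e ν
  tau_sq_of_eq {j : ℕ} (h : j + 1 < m) {ν : Fin m → Fin n} :
    ν ⟨j, Nat.lt_of_succ_lt h⟩ = ν ⟨j + 1, h⟩ → τ j h * τ j h * e ν = 0
  tau_sq_of_orth {j : ℕ} (h : j + 1 < m) {ν : Fin m → Fin n} :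
    A (ν ⟨j, Nat.lt_of_succ_lt h⟩) (ν ⟨j + 1, h⟩) = 0 → τ j h * τ j h * e ν = e ν
  tau_sq_of_neg {j : ℕ} (h : j + 1 < m) {ν : Fin m → Fin n} :
    A (ν ⟨j, Nat.lt_of_succ_lt h⟩) (ν ⟨j + 1, h⟩) < 0 → ∃ a b : k, a ≠ 0 ∧
      τ j h * τ j h * e ν =
        (a • x ⟨j, Nat.lt_of_succ_lt h⟩ ^
            (-A (ν ⟨j, Nat.lt_of_succ_lt h⟩) (ν ⟨j + 1, h⟩)).toNat +
          b • x ⟨j + 1, h⟩ ^ (-A (ν ⟨j + 1, h⟩) (ν ⟨j, Nat.lt_of_succ_lt h⟩)).toNat) * e ν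
  braid_of_ne {j : ℕ} (h₁ : j + 1 < m) (h₂ : j + 2 < m) {ν : Fin m → Fin n} :
    ν ⟨j, Nat.lt_of_succ_lt h₁⟩ ≠ ν ⟨j + 2, h₂⟩ →
      τ (j + 1) h₂ * τ j h₁ * τ (j + 1) h₂ * e ν = τ j h₁ * τ (j + 1) h₂ * τ j h₁ * e ν
  braid_of_eq {j : ℕ} (h₁ : j + 1 < m) (h₂ : j + 2 < m) {ν : Fin m → Fin n} {s : ℕ} :
    ν ⟨j, Nat.lt_of_succ_lt h₁⟩ = ν ⟨j + 2, h₂⟩ →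
    A (ν ⟨j, Nat.lt_of_succ_lt h₁⟩) (ν ⟨j + 1, h₁⟩) = -s → 0 < s → ∃ a : k, a ≠ 0 ∧
      τ (j + 1) h₂ * τ j h₁ * τ (j + 1) h₂ * e ν = τ j h₁ * τ (j + 1) h₂ * τ j h₁ * e ν +
        (a • ∑ i ∈ Finset.range s,
          x ⟨j, Nat.lt_of_succ_lt h₁⟩ ^ i * x ⟨j + 2, h₂⟩ ^ (s - 1 - i)) * e ν
  cyclotomic {p : Fin m} (ν : Fin m → Fin n) :
    (p : ℕ) + 1 = m → x p ^ (Λ (ν p)).toNat * e ν = 0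

/-- The vanishing statement for the positions `≥ p`. -/
structure VanishesFrom {n m : ℕ} {R : Type} [Ring R] (A : Fin n → Fin n → ℤ) (Λ : Fin n → ℤ)
    (e : (Fin m → Fin n) → R) (x : Fin m → R) (p : ℕ) : Prop where
  e_eq_zero {ν : Fin m → Fin n} : ¬IsPathFrom A Λ ν p → e ν = 0
  x_mul_e {q : Fin m} (ν : Fin m → Fin n) : p ≤ (q : ℕ) → x q * e ν = 0

theorem eq_of_forall_mul_eq {ι R : Type*} [Fintype ι] [NonAssocSemiring R] {e : ι → R}
    (he : ∑ i, e i = 1) {a b : R} (h : ∀ i, a * e i = b * e i) : a = b := by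
  rw [← mul_one a, ← mul_one b, ← he, Finset.mul_sum, Finset.mul_sum,
    Finset.sum_congr rfl fun i _ => h i]

theorem geom_sum₂_mul_of_mul_eq_zero {R : Type*} [Semiring R] {x y z : R} (hyz : y * z = 0) {s : ℕ}
    (hs : 0 < s) :
    (∑ i ∈ Finset.range s, x ^ i * y ^ (s - 1 - i)) * z = x ^ (s - 1) * z := by
  rw [Finset.sum_mul, Finset.sum_eq_single (s - 1)]
  · rw [Nat.sub_self, pow_zero, mul_one]
  · intro i hi his
    have : s - 1 - i ≠ 0 := by
      have := Finset.mem_range.1 hi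
      omega
    rw [mul_assoc, ← Nat.succ_pred_eq_of_ne_zero this, pow_succ, mul_assoc, hyz, mul_zero, mul_zero]
  · exact fun hi => absurd (Finset.mem_range.2 (by omega)) hi

section Vanishing

variable {k : Type} [Field k] {n m : ℕ} {A : Fin n → Fin n → ℤ} {d Λ : Fin n → ℤ}
  {R : Type} [Ring R] [Algebra k R] {e : (Fin m → Fin n) → R} {x : Fin m → R}
  {τ : (j : ℕ) → j + 1 < m → R}

namespace IsCyclotomicFamily

theorem tau_mul_e_eq_zero (H : IsCyclotomicFamily k A Λ e x τ) {j : ℕ} (h : j + 1 < m)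
    {ν : Fin m → Fin n} (hν : e (swapSeq j h ν) = 0) : τ j h * e ν = 0 := by
  rw [H.tau_mul_e, hν, zero_mul]

theorem e_eq_tau_mul_e_mul_tau (H : IsCyclotomicFamily k A Λ e x τ) {j : ℕ} (h : j + 1 < m)
    {ν : Fin m → Fin n} (hν : A (ν ⟨j, Nat.lt_of_succ_lt h⟩) (ν ⟨j + 1, h⟩) = 0) :
    e ν = τ j h * e (swapSeq j h ν) * τ j h := by
  rw [mul_assoc, ← H.tau_mul_e, ← mul_assoc, H.tau_sq_of_orth h hν]

theorem e_eq_zero_of_eq_succ (H : IsCyclotomicFamily k A Λ e x τ) {j : ℕ} (h : j + 1 < m)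
    {ν : Fin m → Fin n} (hν : ν ⟨j, Nat.lt_of_succ_lt h⟩ = ν ⟨j + 1, h⟩)
    (hx : x ⟨j + 1, h⟩ * e ν = 0) : e ν = 0 := by
  have he : e ν = -(x ⟨j, Nat.lt_of_succ_lt h⟩ * τ j h * e ν) := by
    have := H.tau_mul_x_succ_of_eq h hν
    rw [mul_assoc, hx, mul_zero] at this
    exact (neg_eq_of_add_eq_zero_right this.symm).symm
  have hcomm : τ j h * e ν = e ν * τ j h := by
    rw [H.tau_mul_e, swapSeq_eq_self h hν]
  have hτ : τ j h * e ν = 0 := by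
    rw [hcomm, he, neg_mul, mul_assoc, ← hcomm, mul_assoc, ← mul_assoc (τ j h),
      H.tau_sq_of_eq h hν, mul_zero, neg_zero]
  rw [he, mul_assoc, hτ, mul_zero, neg_zero]

/-- The error term of the braid relation is all that survives on a word `… i j i …`: one swap makes
the last two letters `i i`, the other exchanges two letters that are not orthogonal. -/
theorem pow_mul_e_eq_zero_of_eq_add_two (H : IsCyclotomicFamily k A Λ e x τ)
    (hA : IsCartanDatum A d) {p : ℕ} (hV : VanishesFrom A Λ e x (p + 1)) (h : p + 2 < m)
    {ν : Fin m → Fin n} (hν : ν ⟨p, by omega⟩ = ν ⟨p + 2, h⟩) {s : ℕ}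
    (hs : A (ν ⟨p, by omega⟩) (ν ⟨p + 1, by omega⟩) = -s) (hs₀ : 0 < s) :
    x ⟨p, by omega⟩ ^ (s - 1) * e ν = 0 := by
  have h₁ : p + 1 < m := by omega
  by_cases hpath : IsPathFrom A Λ ν (p + 1)
  swap
  · rw [hV.e_eq_zero hpath, mul_zero]
  have hleft : e (swapSeq p h₁ ν) = 0 := by
    refine hV.e_eq_zero fun hpath' => hpath'.ne_succ hA h le_rfl ?_
    rw [swapSeq_right, swapSeq_of_ne h₁ ν (by dsimp only; omega) (by simp), hν]
  have hright : e (swapSeq (p + 1) h ν) = 0 := by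
    refine hV.e_eq_zero fun hpath' => ?_
    have h0 := (hpath.swapSeq_iff hA h le_rfl).1 hpath'
    rw [← hν, hA.eq_zero_comm, hs] at h0
    omega
  obtain ⟨a, ha, hbraid⟩ := H.braid_of_eq h₁ h hν hs hs₀
  rw [mul_assoc, H.tau_mul_e_eq_zero h hright, mul_zero, mul_assoc,
    H.tau_mul_e_eq_zero h₁ hleft, mul_zero, zero_add, smul_mul_assoc,
    geom_sum₂_mul_of_mul_eq_zero (hV.x_mul_e ν (by simp)) hs₀] at hbraid
  exact (smul_eq_zero.1 hbraid.symm).resolve_left ha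

/-- Conjugating by `τ` brings the recurring letter step by step next to position `p + 1`. -/
theorem pow_mul_e_eq_zero_of_recurs (H : IsCyclotomicFamily k A Λ e x τ) (hA : IsCartanDatum A d)
    {p q : ℕ} (hV : VanishesFrom A Λ e x (p + 1)) (hpq : p + 2 ≤ q) {s : ℕ} (hs₀ : 0 < s) :
    ∀ (hq : q < m) (ν : Fin m → Fin n), ν ⟨p, by omega⟩ = ν ⟨q, hq⟩ →
    (∀ r : Fin m, p + 2 ≤ (r : ℕ) → (r : ℕ) < q → A (ν ⟨p, by omega⟩) (ν r) = 0) →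
    A (ν ⟨p, by omega⟩) (ν ⟨p + 1, by omega⟩) = -s → x ⟨p, by omega⟩ ^ (s - 1) * e ν = 0 := by
  induction q, hpq using Nat.le_induction with
  | base => exact fun hq ν hν _ hs => H.pow_mul_e_eq_zero_of_eq_add_two hA hV hq hν hs hs₀
  | succ q hpq ih =>
    intro hq ν hν horth hs
    have hswap {r : Fin m} (hr : (r : ℕ) < q) : swapSeq q hq ν r = ν r :=
      swapSeq_of_ne hq ν hr.ne (by omega)
    have horth_q : A (ν ⟨q, by omega⟩) (ν ⟨q + 1, hq⟩) = 0 := by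
      rw [hA.eq_zero_comm, ← hν]
      exact horth _ hpq q.lt_succ_self
    have hx : x ⟨p, by omega⟩ ^ (s - 1) * e (swapSeq q hq ν) = 0 := by
      refine ih (by omega) _ ?_ (fun r hr hrq => ?_) ?_
      · rw [hswap (by dsimp only; omega), swapSeq_left, hν]
      · rw [hswap (by dsimp only; omega), hswap hrq]
        exact horth r hr (by omega)
      · rw [hswap (by dsimp only; omega), hswap (by dsimp only; omega), hs]
    have hcomm := (H.tau_comm_x hq (p := ⟨p, by omega⟩) (by dsimp only; omega)
      (by dsimp only; omega)).pow_right (s - 1)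
    rw [H.e_eq_tau_mul_e_mul_tau hq horth_q, ← mul_assoc, ← mul_assoc, ← hcomm.eq,
      mul_assoc (τ _ _), hx, mul_zero, zero_mul]

theorem vanishing_of_orth (H : IsCyclotomicFamily k A Λ e x τ) (hA : IsCartanDatum A d)
    {p : ℕ} (hV : VanishesFrom A Λ e x (p + 1)) (h : p + 1 < m) {ν : Fin m → Fin n}
    (hν : A (ν ⟨p, by omega⟩) (ν ⟨p + 1, h⟩) = 0) :
    (weight A Λ ν (p + 1) (ν ⟨p, by omega⟩) ≠ 1 → e ν = 0) ∧ x ⟨p, by omega⟩ * e ν = 0 := by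
  rw [weight_apply_eq_sub ν h, hν, sub_zero, H.e_eq_tau_mul_e_mul_tau h hν]
  constructor
  · intro hw
    rw [hV.e_eq_zero, mul_zero, zero_mul]
    intro hpath
    have := hpath ⟨p + 1, h⟩ le_rfl
    rw [swapSeq_right, weight_swapSeq h ν (by simp)] at this
    exact hw this
  · have hne : swapSeq p h ν ⟨p, by omega⟩ ≠ swapSeq p h ν ⟨p + 1, h⟩ := by
      rw [swapSeq_left, swapSeq_right]
      intro heq
      rw [heq, hA.diag] at hν
      omega
    have hx := H.tau_mul_x_of_ne h ⟨p + 1, h⟩ hne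
    rw [mul_assoc, hV.x_mul_e _ le_rfl, mul_zero, posSwap_right] at hx
    rw [← mul_assoc, ← mul_assoc, ← hx, zero_mul]

theorem vanishing_of_neg (H : IsCyclotomicFamily k A Λ e x τ) (hA : IsCartanDatum A d)
    (hΛ : IsMinuscule A Λ) {p : ℕ} (hV : VanishesFrom A Λ e x (p + 1)) (h : p + 1 < m)
    {ν : Fin m → Fin n} (hν : A (ν ⟨p, by omega⟩) (ν ⟨p + 1, h⟩) < 0)
    (hpath : IsPathFrom A Λ ν (p + 1)) :
    (weight A Λ ν (p + 1) (ν ⟨p, by omega⟩) ≠ 1 → e ν = 0) ∧ x ⟨p, by omega⟩ * e ν = 0 := by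
  have hpath' : IsPathFrom A Λ ν (p + 1 + 1) := hpath.mono (by omega)
  have hb := hΛ.weight_bounded h.le hpath (ν ⟨p, by omega⟩)
  have hb' := hΛ.weight_bounded (p := p + 1 + 1) h hpath' (ν ⟨p, by omega⟩)
  have hw := weight_apply_eq_sub (A := A) (Λ := Λ) ν h (ν ⟨p, by omega⟩)
  obtain ⟨s, hs⟩ := Int.exists_eq_neg_ofNat hν.le
  -- If the weight before the letter at `p + 1` pairs to `-1` with the letter at `p`, then that
  -- letter has been used before and the braid relation applies; otherwise `τ p` kills `e ν` and the
  -- quadratic relation applies.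
  rcases hb'.1.eq_or_lt with hneg | hneg
  · obtain ⟨q, hpq, hqi, hall⟩ := hpath'.exists_of_weight_eq_neg_one hA hΛ h hneg.symm
    have hx := H.pow_mul_e_eq_zero_of_recurs hA hV hpq (s := s) (by omega) q.isLt ν hqi.symm hall hs
    obtain rfl | rfl : s = 1 ∨ s = 2 := by omega
    · rw [Nat.sub_self, pow_zero, one_mul] at hx
      exact ⟨fun _ => hx, by rw [hx, mul_zero]⟩
    · refine ⟨fun hne => absurd ?_ hne, by simpa using hx⟩
      omega
  · have hs1 : A (ν ⟨p, by omega⟩) (ν ⟨p + 1, h⟩) = -1 := by omega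
    refine ⟨fun hne => absurd (by omega) hne, ?_⟩
    obtain ⟨a, b, ha, hsq⟩ := H.tau_sq_of_neg h hν
    have hswap : e (swapSeq p h ν) = 0 := by
      refine hV.e_eq_zero fun hpath => ?_
      have := hpath ⟨p + 1, h⟩ le_rfl
      rw [swapSeq_right, weight_swapSeq h ν (by simp)] at this
      dsimp only at this
      omega
    have hneg' := hA.neg_comm hν
    obtain ⟨t, ht⟩ : ∃ t, (-A (ν ⟨p + 1, h⟩) (ν ⟨p, by omega⟩)).toNat = t + 1 := by
      rw [Nat.exists_eq_add_one]
      omega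
    rw [mul_assoc, H.tau_mul_e_eq_zero h hswap, mul_zero, hs1, ht, add_mul, smul_mul_assoc,
      smul_mul_assoc, pow_succ _ t, mul_assoc, hV.x_mul_e ν le_rfl, mul_zero, smul_zero, add_zero,
      neg_neg, Int.toNat_one, pow_one] at hsq
    exact (smul_eq_zero.1 hsq.symm).resolve_left ha

theorem vanishing_step (H : IsCyclotomicFamily k A Λ e x τ) (hA : IsCartanDatum A d)
    (hΛ : IsMinuscule A Λ) {p : ℕ} (hp : p < m) (hV : VanishesFrom A Λ e x (p + 1))
    {ν : Fin m → Fin n} (hpath : IsPathFrom A Λ ν (p + 1)) :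
    (weight A Λ ν (p + 1) (ν ⟨p, hp⟩) ≠ 1 → e ν = 0) ∧ x ⟨p, hp⟩ * e ν = 0 := by
  rcases (Nat.succ_le_of_lt hp).eq_or_lt with hm | hm
  · have hlast := H.cyclotomic (p := ⟨p, hp⟩) ν hm
    have hbound := hΛ.bounded .nil (ν ⟨p, hp⟩)
    have hdom := hΛ.dominant (ν ⟨p, hp⟩)
    rw [weight_of_le ν hm.ge]
    obtain h0 | h1 : Λ (ν ⟨p, hp⟩) = 0 ∨ Λ (ν ⟨p, hp⟩) = 1 := by omega
    · rw [h0, Int.toNat_zero, pow_zero, one_mul] at hlast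
      exact ⟨fun _ => hlast, by rw [hlast, mul_zero]⟩
    · rw [h1, Int.toNat_one, pow_one] at hlast
      exact ⟨fun hne => absurd h1 hne, hlast⟩
  · rcases hA.trichotomy (ν ⟨p, hp⟩) (ν ⟨p + 1, hm⟩) with heq | horth | hneg
    · have he := H.e_eq_zero_of_eq_succ hm heq (hV.x_mul_e ν le_rfl)
      exact ⟨fun _ => he, by rw [he, mul_zero]⟩
    · exact H.vanishing_of_orth hA hV hm horth
    · exact H.vanishing_of_neg hA hΛ hV hm hneg hpath

theorem vanishesFrom (H : IsCyclotomicFamily k A Λ e x τ) (hA : IsCartanDatum A d)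
    (hΛ : IsMinuscule A Λ) {p : ℕ} (hp : p ≤ m) : VanishesFrom A Λ e x p := by
  induction hp using Nat.decreasingInduction with
  | self =>
    exact ⟨fun h => absurd (isPathFrom_of_le _ le_rfl) h, fun {q} _ hq => absurd q.isLt hq.not_gt⟩
  | of_succ p hp hV =>
    refine ⟨fun {ν} hν => ?_, fun {q} ν hq => ?_⟩ <;>
      by_cases hpath : IsPathFrom A Λ ν (p + 1)
    · exact (H.vanishing_step hA hΛ hp hV hpath).1 fun hw =>
        hν ((isPathFrom_iff_succ hp).2 ⟨hpath, hw⟩)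
    · exact hV.e_eq_zero hpath
    · rcases hq.eq_or_lt with hpq | hpq
      · obtain rfl : q = ⟨p, hp⟩ := Fin.ext hpq.symm
        exact (H.vanishing_step hA hΛ hp hV hpath).2
      · exact hV.x_mul_e ν hpq
    · rw [hV.e_eq_zero hpath, mul_zero]

theorem e_eq_zero (H : IsCyclotomicFamily k A Λ e x τ) (hA : IsCartanDatum A d)
    (hΛ : IsMinuscule A Λ) {ν : Fin m → Fin n} (hν : ¬IsPathFrom A Λ ν 0) : e ν = 0 :=
  (H.vanishesFrom hA hΛ m.zero_le).e_eq_zero hν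

theorem x_eq_zero (H : IsCyclotomicFamily k A Λ e x τ) (hA : IsCartanDatum A d)
    (hΛ : IsMinuscule A Λ) (p : Fin m) : x p = 0 :=
  eq_of_forall_mul_eq H.completeOrthogonal.complete fun ν => by
    rw [(H.vanishesFrom hA hΛ m.zero_le).x_mul_e ν (Nat.zero_le _), zero_mul]

theorem braid (H : IsCyclotomicFamily k A Λ e x τ) (hA : IsCartanDatum A d)
    (hΛ : IsMinuscule A Λ) {j : ℕ} (h₁ : j + 1 < m) (h₂ : j + 2 < m) :
    τ (j + 1) h₂ * τ j h₁ * τ (j + 1) h₂ = τ j h₁ * τ (j + 1) h₂ * τ j h₁ := by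
  refine eq_of_forall_mul_eq H.completeOrthogonal.complete fun ν => ?_
  by_cases hν : IsPathFrom A Λ ν 0
  swap
  · rw [H.e_eq_zero hA hΛ hν, mul_zero, mul_zero]
  by_cases hj : ν ⟨j, Nat.lt_of_succ_lt h₁⟩ = ν ⟨j + 2, h₂⟩
  · obtain ⟨a, -, hbraid⟩ :=
      H.braid_of_eq h₁ h₂ (s := 2) hj (hν.apply_eq_neg_two hA h₂ hj) two_pos
    rw [hbraid, H.x_eq_zero hA hΛ, H.x_eq_zero hA hΛ]
    simp [Finset.sum_range_succ]
  · exact H.braid_of_ne h₁ h₂ hj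

end IsCyclotomicFamily

end Vanishing

/-- The cyclotomic quiver Hecke algebra `R^Λ(m)`: the sum over all `β` of height `m`, hence no
restriction on the residue sequences. -/
abbrev CyclotomicQHA (k : Type) [Field k] {n : ℕ} (Q : Fin n → Fin n → MvPolynomial (Fin 2) k)
    (Λ : Fin n → ℤ) (m : ℕ) : Type :=
  RingQuot (CRel k Q (Set.univ : Set (Fin m → Fin n)) Λ)

section Quotient

variable {k : Type} [Field k] {n m : ℕ} {A : Fin n → Fin n → ℤ}
  {Q : Fin n → Fin n → MvPolynomial (Fin 2) k} {Λ : Fin n → ℤ}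

namespace CyclotomicQHA

variable (Q Λ) in
/-- The image in `CyclotomicQHA` of the generator `e(ν)`. -/
noncomputable abbrev e (ν : Fin m → Fin n) : CyclotomicQHA k Q Λ m :=
  RingQuot.mkAlgHom k _ (Eg k ν)

variable (Q Λ) in
/-- The image in `CyclotomicQHA` of the generator `x_p`. -/
noncomputable abbrev x (p : Fin m) : CyclotomicQHA k Q Λ m :=
  RingQuot.mkAlgHom k _ (Xg k p)

variable (Q Λ) in
/-- The image in `CyclotomicQHA` of the generator `τ_j`. -/
noncomputable abbrev τ (j : ℕ) (h : j + 1 < m) : CyclotomicQHA k Q Λ m :=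
  RingQuot.mkAlgHom k _ (Tg k j h)

theorem mk_eq_of_rel {a b : FA k n m} (h : Rel k Q Set.univ a b) :
    RingQuot.mkAlgHom k (CRel k Q Set.univ Λ) a = RingQuot.mkAlgHom k _ b :=
  RingQuot.mkAlgHom_rel k (Or.inl h)

theorem completeOrthogonalIdempotents_e :
    CompleteOrthogonalIdempotents (e Q Λ : (Fin m → Fin n) → CyclotomicQHA k Q Λ m) where
  idem ν := by
    simpa only [IsIdempotentElem, map_mul] using mk_eq_of_rel (Λ := Λ) (.e_idem (Q := Q) ν)
  ortho ν ν' h := by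
    simpa only [map_mul, map_zero] using mk_eq_of_rel (Λ := Λ) (.e_orth (Q := Q) ν ν' h)
  complete := by simpa only [map_sum, map_one] using mk_eq_of_rel (Λ := Λ) (.e_sum (Q := Q))

theorem isCyclotomicFamily (hQ : IsBinomial A Q) :
    IsCyclotomicFamily k A Λ (e Q Λ : (Fin m → Fin n) → _) (x Q Λ) (τ Q Λ) where
  completeOrthogonal := completeOrthogonalIdempotents_e
  tau_mul_e j h ν := by simpa only [map_mul] using mk_eq_of_rel (.te j h ν)
  tau_comm ha hb hab := by simpa only [map_mul] using mk_eq_of_rel (.tt _ ha _ hb (.inl hab))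
  tau_comm_x {j} h {p} hj hj' := by
    refine eq_of_forall_mul_eq completeOrthogonalIdempotents_e.complete fun ν => ?_
    simpa only [map_mul, posSwap_of_ne h hj hj'] using
      mk_eq_of_rel (.tx_comm j h ν p (.inr ⟨hj, hj'⟩))
  tau_mul_x_of_ne {j} h {ν} p hν := by
    simpa only [map_mul] using mk_eq_of_rel (.tx_comm j h ν p (.inl hν))
  tau_mul_x_succ_of_eq {j} h {ν} hν := by
    simpa only [map_mul, map_add] using mk_eq_of_rel (.tx_right j h ν hν)
  tau_sq_of_eq {j} h {ν} hν := by
    have := mk_eq_of_rel (Λ := Λ) (.tsq (Q := Q) j h ν)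
    rw [hν, hQ.diag] at this
    simpa only [map_mul, eval2_zero, zero_mul, map_zero] using this
  tau_sq_of_orth {j} h {ν} hν := by
    have := mk_eq_of_rel (Λ := Λ) (.tsq (Q := Q) j h ν)
    rw [hQ.eq_one hν] at this
    simpa only [map_mul, eval2_one, one_mul] using this
  tau_sq_of_neg {j} h {ν} hν := by
    obtain ⟨a, b, ha, hab⟩ := hQ.eq_add hν
    refine ⟨a, b, ha, ?_⟩
    have := mk_eq_of_rel (Λ := Λ) (.tsq (Q := Q) j h ν)
    rw [hab, eval2_add, eval2_monomial, eval2_monomial] at this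
    simpa using this
  braid_of_ne {j} h₁ h₂ {ν} hν := by
    simpa only [map_mul] using mk_eq_of_rel (.braid_ne j h₁ h₂ ν hν)
  braid_of_eq {j} h₁ h₂ {ν} s hν hs hs₀ := by
    obtain ⟨a, b, ha, hab⟩ := hQ.eq_add (show A _ _ < 0 by rw [hs]; omega)
    refine ⟨a, ha, ?_⟩
    have := mk_eq_of_rel (Λ := Λ) (.braid_eq (Q := Q) j h₁ h₂ ν hν)
    rw [hab, eval3_Qbar_monomial_add_monomial, hs, neg_neg, Int.toNat_natCast] at this
    simpa only [map_add, map_mul, map_smul, map_sum, map_pow] using this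
  cyclotomic {p} ν hp := by
    have : RingQuot.mkAlgHom k (CRel k Q Set.univ Λ) _ = RingQuot.mkAlgHom k _ _ :=
      RingQuot.mkAlgHom_rel k (Or.inr (.cyc ν (Set.mem_univ ν) p hp))
    simpa only [map_mul, map_pow, map_zero] using this

end CyclotomicQHA

end Quotient

/-! ### The presentation by path words -/

/-- Complete orthogonal idempotents `e ν` indexed by a set `X` and elements `τ j` permuting them
along the `j`-adjacency of `X`, subject to the Coxeter relations: the relations that survive in the
cyclotomic quotient of a minuscule weight. -/
structure IsSwapFamily {m : ℕ} {X : Type} [Fintype X] {R : Type} [Ring R]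
    (adj : (j : ℕ) → j + 1 < m → X → X → Prop) (e : X → R) (τ : (j : ℕ) → j + 1 < m → R) :
    Prop where
  completeOrthogonal : CompleteOrthogonalIdempotents e
  tau_mul_e {j : ℕ} {h : j + 1 < m} {ν ν' : X} : adj j h ν ν' → τ j h * e ν = e ν' * τ j h
  tau_mul_e_eq_zero {j : ℕ} {h : j + 1 < m} {ν : X} :
    (∀ ν', ¬adj j h ν ν') → τ j h * e ν = 0
  tau_sq {j : ℕ} {h : j + 1 < m} {ν ν' : X} : adj j h ν ν' → τ j h * τ j h * e ν = e ν
  tau_comm {a b : ℕ} (ha : a + 1 < m) (hb : b + 1 < m) :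
    a + 1 < b → τ a ha * τ b hb = τ b hb * τ a ha
  braid {j : ℕ} (h₁ : j + 1 < m) (h₂ : j + 2 < m) :
    τ (j + 1) h₂ * τ j h₁ * τ (j + 1) h₂ = τ j h₁ * τ (j + 1) h₂ * τ j h₁

/-- The universal property of the `k`-algebra presented by the relations of `IsSwapFamily`. -/
structure IsUniversalSwapFamily (k : Type) [Field k] {m : ℕ} {X : Type} [Fintype X] {R : Type}
    [Ring R] [Algebra k R] (adj : (j : ℕ) → j + 1 < m → X → X → Prop) (e : X → R)
    (τ : (j : ℕ) → j + 1 < m → R) : Prop extends IsSwapFamily adj e τ where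
  hom_ext {S : Type} [Ring S] [Algebra k S] {f g : R →ₐ[k] S} :
    (∀ ν, f (e ν) = g (e ν)) → (∀ j h, f (τ j h) = g (τ j h)) → f = g
  exists_hom {S : Type} [Ring S] [Algebra k S] {e' : X → S} {τ' : (j : ℕ) → j + 1 < m → S} :
    IsSwapFamily adj e' τ' →
      ∃ f : R →ₐ[k] S, (∀ ν, f (e ν) = e' ν) ∧ ∀ j h, f (τ j h) = τ' j h

section SwapFamily

variable {m : ℕ} {X X' : Type} [Fintype X] [Fintype X'] {R : Type} [Ring R]
  {adj : (j : ℕ) → j + 1 < m → X → X → Prop} {adj' : (j : ℕ) → j + 1 < m → X' → X' → Prop}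
  {e : X → R} {τ : (j : ℕ) → j + 1 < m → R}

theorem IsSwapFamily.e_mul_tau_eq_zero (H : IsSwapFamily adj e τ) {j : ℕ} {h : j + 1 < m} {ν : X}
    (hν : ∀ ν', ¬adj j h ν' ν) : e ν * τ j h = 0 := by
  refine eq_of_forall_mul_eq H.completeOrthogonal.complete fun ν' => ?_
  rw [zero_mul, mul_assoc]
  by_cases hadj : ∃ ν'', adj j h ν' ν''
  · obtain ⟨ν'', hadj⟩ := hadj
    have hne : ν ≠ ν'' := fun heq => hν ν' (heq ▸ hadj)
    rw [H.tau_mul_e hadj, ← mul_assoc, H.completeOrthogonal.ortho hne, zero_mul]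
  · rw [H.tau_mul_e_eq_zero (not_exists.1 hadj), mul_zero]

theorem IsSwapFamily.reindex (H : IsSwapFamily adj e τ) (φ : X' ≃ X)
    (hφ : ∀ j h ν ν', adj' j h ν ν' ↔ adj j h (φ ν) (φ ν')) : IsSwapFamily adj' (e ∘ φ) τ where
  completeOrthogonal := (CompleteOrthogonalIdempotents.equiv φ).2 H.completeOrthogonal
  tau_mul_e hadj := H.tau_mul_e ((hφ _ _ _ _).1 hadj)
  tau_mul_e_eq_zero hν := H.tau_mul_e_eq_zero fun ν' hadj =>
    hν (φ.symm ν') ((hφ _ _ _ _).2 (by rwa [φ.apply_symm_apply]))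
  tau_sq hadj := H.tau_sq ((hφ _ _ _ _).1 hadj)
  tau_comm := H.tau_comm
  braid := H.braid

theorem IsUniversalSwapFamily.nonempty_algEquiv {k : Type} [Field k] [Algebra k R] {R' : Type}
    [Ring R'] [Algebra k R'] {e' : X' → R'} {τ' : (j : ℕ) → j + 1 < m → R'}
    (H : IsUniversalSwapFamily k adj e τ) (H' : IsUniversalSwapFamily k adj' e' τ') (φ : X ≃ X')
    (hφ : ∀ j h ν ν', adj j h ν ν' ↔ adj' j h (φ ν) (φ ν')) : Nonempty (R ≃ₐ[k] R') := by
  obtain ⟨f, hfe, hfτ⟩ := H.exists_hom (H'.reindex φ hφ)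
  obtain ⟨g, hge, hgτ⟩ := H'.exists_hom (H.reindex φ.symm fun j h ν ν' => by simp [hφ])
  exact ⟨.ofAlgHom f g (H'.hom_ext (by simp [hfe, hge]) (by simp [hfτ, hgτ]))
    (H.hom_ext (by simp [hfe, hge]) (by simp [hfτ, hgτ]))⟩

end SwapFamily

theorem completeOrthogonalIdempotents_extend {ι κ R : Type*} [Fintype ι] [Fintype κ] [Semiring R]
    {i : ι → κ} (hi : Function.Injective i) {e : ι → R} (he : CompleteOrthogonalIdempotents e) :
    CompleteOrthogonalIdempotents (Function.extend i e 0) := by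
  refine CompleteOrthogonalIdempotents.iff_ortho_complete.2 ⟨fun a b hab => ?_, ?_⟩
  · by_cases ha : ∃ c, i c = a
    swap
    · simp [Function.extend_apply' _ _ _ ha]
    by_cases hb : ∃ c, i c = b
    swap
    · simp [Function.extend_apply' _ _ _ hb]
    obtain ⟨⟨a, rfl⟩, b, rfl⟩ := ha, hb
    simpa only [hi.extend_apply] using he.ortho (ne_of_apply_ne i hab)
  · rw [← he.complete]
    exact (Fintype.sum_of_injective i hi e (Function.extend i e 0)
      (fun b hb => Function.extend_apply' _ _ b hb) fun a => (hi.extend_apply _ _ a).symm).symm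

section Presentation

variable {k : Type} [Field k] {n m : ℕ} {A : Fin n → Fin n → ℤ} {d : Fin n → ℤ}
  {Q : Fin n → Fin n → MvPolynomial (Fin 2) k} {Λ : Fin n → ℤ} {R : Type} [Ring R]

theorem IsCyclotomicFamily.isSwapFamily [Algebra k R] {e : (Fin m → Fin n) → R} {x : Fin m → R}
    {τ : (j : ℕ) → j + 1 < m → R} (H : IsCyclotomicFamily k A Λ e x τ) (hA : IsCartanDatum A d)
    (hΛ : IsMinuscule A Λ) :
    IsSwapFamily PathWord.Adj (fun ν : PathWord A Λ m => e ν.1) τ where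
  completeOrthogonal :=
    { H.completeOrthogonal.toOrthogonalIdempotents.embedding (.subtype _) with
      complete := by
        rw [← H.completeOrthogonal.complete]
        refine Fintype.sum_of_injective _ Subtype.val_injective _ _ (fun ν hν => ?_) fun _ => rfl
        exact H.e_eq_zero hA hΛ fun hpath => hν ⟨⟨ν, hpath⟩, rfl⟩ }
  tau_mul_e {j h ν ν'} hadj := by rw [H.tau_mul_e, hadj]
  tau_mul_e_eq_zero {j h ν} hν := H.tau_mul_e_eq_zero h <| H.e_eq_zero hA hΛ fun hpath =>
    hν ⟨_, hpath⟩ rfl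
  tau_sq {j h ν ν'} hadj :=
    H.tau_sq_of_orth h ((ν.2.swapSeq_iff hA h j.zero_le).1 (hadj ▸ ν'.2))
  tau_comm := H.tau_comm
  braid := H.braid hA hΛ

/-- Extension by zero to all words of a family indexed by path words. -/
noncomputable def extendZero (e : PathWord A Λ m → R) : (Fin m → Fin n) → R :=
  Function.extend (fun ν : PathWord A Λ m => ν.1) e (0 : (Fin m → Fin n) → R)

theorem extendZero_of_isPathFrom (e : PathWord A Λ m → R) {ν : Fin m → Fin n}
    (hν : IsPathFrom A Λ ν 0) : extendZero e ν = e ⟨ν, hν⟩ :=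
  Subtype.val_injective.extend_apply _ _ ⟨ν, hν⟩

theorem extendZero_eq_zero (e : PathWord A Λ m → R) {ν : Fin m → Fin n}
    (hν : ¬IsPathFrom A Λ ν 0) : extendZero e ν = 0 :=
  Function.extend_apply' _ _ ν fun ⟨ν', h⟩ => hν (h ▸ ν'.2)

theorem extendZero_eq_zero_of_eq (hA : IsCartanDatum A d) (e : PathWord A Λ m → R) {j : ℕ}
    (h : j + 1 < m) {ν : Fin m → Fin n} (hν : ν ⟨j, Nat.lt_of_succ_lt h⟩ = ν ⟨j + 1, h⟩) :
    extendZero e ν = 0 :=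
  extendZero_eq_zero e fun hpath => hpath.ne_succ hA h j.zero_le hν

variable {e : PathWord A Λ m → R} {τ : (j : ℕ) → j + 1 < m → R}

theorem IsSwapFamily.tau_mul_extendZero (H : IsSwapFamily PathWord.Adj e τ) {j : ℕ} (h : j + 1 < m)
    (ν : Fin m → Fin n) : τ j h * extendZero e ν = extendZero e (swapSeq j h ν) * τ j h := by
  by_cases hν : IsPathFrom A Λ ν 0 <;> by_cases hν' : IsPathFrom A Λ (swapSeq j h ν) 0
  · rw [extendZero_of_isPathFrom e hν, extendZero_of_isPathFrom e hν']
    exact H.tau_mul_e rfl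
  · rw [extendZero_of_isPathFrom e hν, extendZero_eq_zero e hν', zero_mul]
    exact H.tau_mul_e_eq_zero fun ν' hadj => hν' (hadj ▸ ν'.2)
  · rw [extendZero_eq_zero e hν, extendZero_of_isPathFrom e hν', mul_zero]
    refine (H.e_mul_tau_eq_zero fun ν' hadj => hν ?_).symm
    have : ν = ν'.1 := by
      rw [← swapSeq_swapSeq h ν, ← swapSeq_swapSeq h ν'.1]
      exact congrArg _ hadj
    exact this ▸ ν'.2
  · rw [extendZero_eq_zero e hν, extendZero_eq_zero e hν', mul_zero, zero_mul]

variable [Algebra k R]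

theorem IsSwapFamily.tau_sq_extendZero (H : IsSwapFamily PathWord.Adj e τ) (hA : IsCartanDatum A d)
    (hQ : IsBinomial A Q) {j : ℕ} (h : j + 1 < m) (ν : Fin m → Fin n) :
    τ j h * τ j h * extendZero e ν =
      eval2 k (Q (ν ⟨j, Nat.lt_of_succ_lt h⟩) (ν ⟨j + 1, h⟩)) 0 0 * extendZero e ν := by
  by_cases hν : IsPathFrom A Λ ν 0
  swap
  · rw [extendZero_eq_zero e hν, mul_zero, mul_zero]
  have hiff := hν.swapSeq_iff hA h j.zero_le
  rcases hA.trichotomy (ν ⟨j, Nat.lt_of_succ_lt h⟩) (ν ⟨j + 1, h⟩) with heq | horth | hneg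
  · exact absurd heq (hν.ne_succ hA h j.zero_le)
  · rw [hQ.eq_one horth, eval2_one, one_mul, extendZero_of_isPathFrom e hν]
    exact H.tau_sq (ν' := ⟨_, hiff.2 horth⟩) rfl
  · rw [hQ.eval2_zero_zero hA hneg, zero_mul, mul_assoc, H.tau_mul_extendZero h,
      extendZero_eq_zero e fun hpath => hneg.ne (hiff.1 hpath), zero_mul, mul_zero]

theorem eval3_Qbar_mul_extendZero (e : PathWord A Λ m → R) (hA : IsCartanDatum A d)
    (hQ : IsBinomial A Q) {j : ℕ} (h₁ : j + 1 < m) (h₂ : j + 2 < m) {ν : Fin m → Fin n}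
    (hν : ν ⟨j, Nat.lt_of_succ_lt h₁⟩ = ν ⟨j + 2, h₂⟩) :
    eval3 k (Qbar k (Q (ν ⟨j, Nat.lt_of_succ_lt h₁⟩) (ν ⟨j + 1, h₁⟩))) 0 0 0 * extendZero e ν =
      0 := by
  by_cases hpath : IsPathFrom A Λ ν 0
  · rw [hQ.eval3_Qbar_zero (hpath.apply_eq_neg_two hA h₂ hν), zero_mul]
  · rw [extendZero_eq_zero e hpath, mul_zero]

theorem zero_pow_mul_extendZero (e : PathWord A Λ m → R) (ν : Fin m → Fin n) {p : Fin m}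
    (hp : (p : ℕ) + 1 = m) : (0 : R) ^ (Λ (ν p)).toNat * extendZero e ν = 0 := by
  by_cases hpath : IsPathFrom A Λ ν 0
  · have hw := hpath p (Nat.zero_le _)
    rw [weight_of_le ν hp.ge] at hw
    rw [hw, Int.toNat_one, pow_one, zero_mul]
  · rw [extendZero_eq_zero e hpath, mul_zero]

/-- The images of the generators under the homomorphism out of the cyclotomic quotient determined
by a family indexed by path words: the `x p` go to zero. -/
noncomputable def genImage (e : PathWord A Λ m → R) (τ : (j : ℕ) → j + 1 < m → R) : Gen n m → R
  | .e ν => extendZero e ν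
  | .x _ => 0
  | .t j h => τ j h

theorem IsSwapFamily.lift_eq_of_cRel (H : IsSwapFamily PathWord.Adj e τ) (hA : IsCartanDatum A d)
    (hQ : IsBinomial A Q) {a b : FA k n m} (hab : CRel k Q Set.univ Λ a b) :
    FreeAlgebra.lift k (genImage e τ) a = FreeAlgebra.lift k (genImage e τ) b := by
  have he (ν) : FreeAlgebra.lift k (genImage e τ) (Eg k ν) = extendZero e ν :=
    FreeAlgebra.lift_ι_apply _ _
  have hx (p) : FreeAlgebra.lift k (genImage e τ) (Xg k p) = 0 := FreeAlgebra.lift_ι_apply _ _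
  have hτ (j h) : FreeAlgebra.lift k (genImage e τ) (Tg k j h) = τ j h :=
    FreeAlgebra.lift_ι_apply _ _
  have hcomplete : CompleteOrthogonalIdempotents (extendZero e) :=
    completeOrthogonalIdempotents_extend Subtype.val_injective H.completeOrthogonal
  rcases hab with hab | ⟨ν, hν, p, hp⟩
  swap
  · simpa [he, hx] using zero_pow_mul_extendZero e ν hp
  cases hab with
  | e_orth ν ν' hne => simpa [he] using hcomplete.ortho hne
  | e_idem ν => simpa [he] using (hcomplete.idem ν).eq
  | e_sum => simpa [he] using hcomplete.complete
  | e_out ν hν => exact absurd (Set.mem_univ ν) hν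
  | xx | xe | tx_comm => simp [hx]
  | te j h ν => simpa [he, hτ] using H.tau_mul_extendZero h ν
  | tt a ha b hb hab =>
    rcases hab with hab | hab
    · simpa [hτ] using H.tau_comm ha hb hab
    · simpa [hτ] using (H.tau_comm hb ha hab).symm
  | tsq j h ν => simpa [he, hx, hτ, map_eval2] using H.tau_sq_extendZero hA hQ h ν
  | tx_left j h ν hν | tx_right j h ν hν => simp [he, hx, extendZero_eq_zero_of_eq hA e h hν]
  | braid_ne j h₁ h₂ ν hν => simp [he, hτ, H.braid h₁ h₂]
  | braid_eq j h₁ h₂ ν hν =>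
    simp [he, hx, hτ, map_eval3, H.braid h₁ h₂,
      eval3_Qbar_mul_extendZero e hA hQ h₁ h₂ hν]

theorem CyclotomicQHA.isUniversalSwapFamily (hA : IsCartanDatum A d) (hΛ : IsMinuscule A Λ)
    (hQ : IsBinomial A Q) :
    IsUniversalSwapFamily k PathWord.Adj (fun ν : PathWord A Λ m => CyclotomicQHA.e Q Λ ν.1)
      (CyclotomicQHA.τ (m := m) Q Λ) where
  toIsSwapFamily := (isCyclotomicFamily hQ).isSwapFamily hA hΛ
  hom_ext {S _ _ f g} hfe hfτ := by
    have H := isCyclotomicFamily (m := m) (Λ := Λ) hQ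
    refine RingQuot.ringQuot_ext' _ _ _ (FreeAlgebra.hom_ext (funext fun a => ?_))
    cases a with
    | e ν =>
      change f (CyclotomicQHA.e Q Λ ν) = g (CyclotomicQHA.e Q Λ ν)
      by_cases hν : IsPathFrom A Λ ν 0
      · exact hfe ⟨ν, hν⟩
      · rw [H.e_eq_zero hA hΛ hν, map_zero, map_zero]
    | x p =>
      change f (CyclotomicQHA.x Q Λ p) = g (CyclotomicQHA.x Q Λ p)
      rw [H.x_eq_zero hA hΛ, map_zero, map_zero]
    | t j h => exact hfτ j h
  exists_hom {S _ _ e' τ'} H := by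
    refine ⟨RingQuot.liftAlgHom k ⟨FreeAlgebra.lift k (genImage e' τ'), fun _ _ hab =>
      H.lift_eq_of_cRel hA hQ hab⟩, fun ν => ?_, fun j h => ?_⟩
    · rw [CyclotomicQHA.e, RingQuot.liftAlgHom_mkAlgHom_apply]
      exact (FreeAlgebra.lift_ι_apply _ _).trans (extendZero_of_isPathFrom e' ν.2)
    · rw [CyclotomicQHA.τ, RingQuot.liftAlgHom_mkAlgHom_apply]
      exact FreeAlgebra.lift_ι_apply _ _

theorem CyclotomicQHA.nonempty_algEquiv {n' : ℕ} {A' : Fin n' → Fin n' → ℤ} {d' Λ' : Fin n' → ℤ}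
    {Q' : Fin n' → Fin n' → MvPolynomial (Fin 2) k} (hA : IsCartanDatum A d)
    (hΛ : IsMinuscule A Λ) (hQ : QAdmissible k A d Q) (hA' : IsCartanDatum A' d')
    (hΛ' : IsMinuscule A' Λ') (hQ' : QAdmissible k A' d' Q') (φ : PathWord A Λ m ≃ PathWord A' Λ' m)
    (hφ : ∀ j h ν ν', PathWord.Adj j h ν ν' ↔ PathWord.Adj j h (φ ν) (φ ν')) :
    Nonempty (CyclotomicQHA k Q Λ m ≃ₐ[k] CyclotomicQHA k Q' Λ' m) :=
  (isUniversalSwapFamily hA hΛ (hQ.isBinomial hA)).nonempty_algEquiv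
    (isUniversalSwapFamily hA' hΛ' (hQ'.isBinomial hA')) φ hφ

end Presentation

/-! ### Foldings -/

/-- Pushforward of weights, in fundamental-weight coordinates, along a map of nodes: the
coordinates over each fibre are added up. -/
noncomputable abbrev foldWeight {n n' : ℕ} (f : Fin n → Fin n') :
    (Fin n → ℤ) →ₗ[ℤ] (Fin n' → ℤ) :=
  FunOnFinite.linearMap ℤ ℤ f

/-- A map of nodes compatible with Cartan matrices and highest weights, such that for each weight
of the crystal of `Λ` at most one node of each fibre has a nonzero coordinate. -/
structure IsFolding {n n' : ℕ} (A : Fin n → Fin n → ℤ) (Λ : Fin n → ℤ)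
    (A' : Fin n' → Fin n' → ℤ) (Λ' : Fin n' → ℤ) (f : Fin n → Fin n') : Prop where
  surjective : Function.Surjective f
  foldWeight_αcol (a : Fin n) : foldWeight f (αcol A a) = αcol A' (f a)
  foldWeight_eq : foldWeight f Λ = Λ'
  injOn {l : List (Fin n)} {ξ : Fin n → ℤ} : FPath A Λ l ξ → Set.InjOn f (Function.support ξ)

section Folding

variable {n n' m : ℕ} {A : Fin n → Fin n → ℤ} {d Λ : Fin n → ℤ} {A' : Fin n' → Fin n' → ℤ}
  {d' Λ' : Fin n' → ℤ} {f : Fin n → Fin n'}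

theorem foldWeight_apply_of_ne_zero {ξ : Fin n → ℤ} (hξ : Set.InjOn f (Function.support ξ))
    {a : Fin n} (ha : ξ a ≠ 0) : foldWeight f ξ (f a) = ξ a := by
  rw [FunOnFinite.linearMap_apply_apply]
  refine Finset.sum_eq_single_of_mem a (by simp) fun b hb hba => ?_
  by_contra hb0
  exact hba (hξ hb0 ha (Finset.mem_filter.1 hb).2)

theorem exists_apply_eq_foldWeight {ξ : Fin n → ℤ} (hξ : Set.InjOn f (Function.support ξ))
    {i : Fin n'} (hi : foldWeight f ξ i ≠ 0) : ∃ a, f a = i ∧ ξ a = foldWeight f ξ i := by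
  have hsum := hi
  rw [FunOnFinite.linearMap_apply_apply] at hsum
  obtain ⟨a, ha, ha0⟩ := Finset.exists_ne_zero_of_sum_ne_zero hsum
  obtain rfl : f a = i := (Finset.mem_filter.1 ha).2
  exact ⟨a, rfl, (foldWeight_apply_of_ne_zero hξ ha0).symm⟩

namespace IsFolding

theorem exists_fPath (H : IsFolding A Λ A' Λ' f) {l' : List (Fin n')} {ξ' : Fin n' → ℤ}
    (h : FPath A' Λ' l' ξ') : ∃ l ξ, FPath A Λ l ξ ∧ foldWeight f ξ = ξ' := by
  induction h with
  | nil => exact ⟨[], Λ, .nil, H.foldWeight_eq⟩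
  | cons i l' ξ' _ hi ih =>
    obtain ⟨l, ξ, hl, rfl⟩ := ih
    obtain ⟨a, rfl, ha⟩ := exists_apply_eq_foldWeight (H.injOn hl) (hi.trans_ne one_ne_zero)
    exact ⟨a :: l, _, .cons a l ξ hl (ha.trans hi), by rw [map_sub, H.foldWeight_αcol]⟩

theorem isMinuscule (H : IsFolding A Λ A' Λ' f) (hΛ : IsMinuscule A Λ) : IsMinuscule A' Λ' where
  dominant i := by
    rw [← H.foldWeight_eq, FunOnFinite.linearMap_apply_apply]
    exact Finset.sum_nonneg fun a _ => hΛ.dominant a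
  bounded {l' ξ'} h i := by
    obtain ⟨l, ξ, hl, rfl⟩ := H.exists_fPath h
    by_cases hi : foldWeight f ξ i = 0
    · simp [hi]
    · obtain ⟨a, -, ha⟩ := exists_apply_eq_foldWeight (H.injOn hl) hi
      exact ha ▸ hΛ.bounded hl a

theorem apply_eq_zero (H : IsFolding A Λ A' Λ' f) (hA : IsCartanDatum A d)
    (hA' : IsCartanDatum A' d') {a b : Fin n} (h : A' (f a) (f b) = 0) : A a b = 0 := by
  have hne : f a ≠ f b := fun heq => by simp [heq, hA'.diag] at h
  have hsum : ∑ c with f c = f a, A c b = 0 := by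
    rw [← h, ← FunOnFinite.linearMap_apply_apply ℤ ℤ f fun c => A c b]
    exact congrFun (H.foldWeight_αcol b) (f a)
  refine (Finset.sum_eq_zero_iff_of_nonpos fun c hc => hA.nonpos ?_).1 hsum a (by simp)
  rintro rfl
  exact hne (Finset.mem_filter.1 hc).2.symm

theorem weight_comp (H : IsFolding A Λ A' Λ' f) (ν : Fin m → Fin n) (p : ℕ) :
    weight A' Λ' (f ∘ ν) p = foldWeight f (weight A Λ ν p) := by
  simp [weight, H.foldWeight_eq, H.foldWeight_αcol]

theorem injOn_weight (H : IsFolding A Λ A' Λ' f) {ν : Fin m → Fin n} {p : ℕ} (hp : p ≤ m)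
    (hν : IsPathFrom A Λ ν p) : Set.InjOn f (Function.support (weight A Λ ν p)) :=
  let ⟨_, hl⟩ := hν.exists_fPath hp
  H.injOn hl

theorem isPathFrom_comp (H : IsFolding A Λ A' Λ' f) {ν : Fin m → Fin n} {p : ℕ}
    (hν : IsPathFrom A Λ ν p) : IsPathFrom A' Λ' (f ∘ ν) p := by
  intro q hq
  have hw := hν q hq
  rw [H.weight_comp, Function.comp_apply, foldWeight_apply_of_ne_zero _ (hw.trans_ne one_ne_zero),
    hw]
  exact H.injOn_weight q.isLt (hν.mono (by omega))

theorem eq_of_comp_eq (H : IsFolding A Λ A' Λ' f) {ν ν' : Fin m → Fin n} (heq : f ∘ ν = f ∘ ν')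
    {p : ℕ} (hp : p ≤ m) : IsPathFrom A Λ ν p → IsPathFrom A Λ ν' p →
      ∀ q : Fin m, p ≤ (q : ℕ) → ν q = ν' q := by
  induction hp using Nat.decreasingInduction with
  | self => exact fun _ _ q hq => absurd q.isLt hq.not_gt
  | of_succ p hp ih =>
    intro hν hν' q hq
    obtain ⟨hν, hw⟩ := (isPathFrom_iff_succ hp).1 hν
    obtain ⟨hν', hw'⟩ := (isPathFrom_iff_succ hp).1 hν'
    rcases hq.eq_or_lt with hpq | hpq
    · obtain rfl : q = ⟨p, hp⟩ := Fin.ext hpq.symm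
      rw [← weight_congr (ih hν hν')] at hw'
      exact H.injOn_weight hp hν (hw.trans_ne one_ne_zero) (hw'.trans_ne one_ne_zero)
        (congrFun heq _)
    · exact ih hν hν' q hpq

theorem exists_comp_eq (H : IsFolding A Λ A' Λ' f) {ν' : Fin m → Fin n'} {p : ℕ} (hp : p ≤ m) :
    IsPathFrom A' Λ' ν' p → ∃ ν, f ∘ ν = ν' ∧ IsPathFrom A Λ ν p := by
  induction hp using Nat.decreasingInduction with
  | self =>
    exact fun _ => ⟨Function.surjInv H.surjective ∘ ν',
      funext fun q => Function.surjInv_eq H.surjective (ν' q), isPathFrom_of_le _ le_rfl⟩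
  | of_succ p hp ih =>
    intro hν'
    obtain ⟨hpath, hw⟩ := (isPathFrom_iff_succ hp).1 hν'
    obtain ⟨ν, rfl, hν⟩ := ih hpath
    rw [H.weight_comp] at hw
    obtain ⟨a, ha, haw⟩ := exists_apply_eq_foldWeight (H.injOn_weight hp hν)
      (hw.trans_ne one_ne_zero)
    have hupdate (q : Fin m) (hq : p + 1 ≤ (q : ℕ)) : ν q = Function.update ν ⟨p, hp⟩ a q :=
      (Function.update_of_ne (Fin.ne_of_val_ne (by dsimp only; omega)) _ _).symm
    refine ⟨Function.update ν ⟨p, hp⟩ a, ?_, (isPathFrom_iff_succ hp).2 ⟨hν.congr hupdate, ?_⟩⟩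
    · rw [Function.comp_update, ha]
      exact Function.update_eq_self ⟨p, hp⟩ (f ∘ ν)
    · rw [← weight_congr hupdate, Function.update_self, haw, hw]

/-- The bijection between path words induced by a folding. -/
noncomputable def pathWordEquiv (H : IsFolding A Λ A' Λ' f) (m : ℕ) :
    PathWord A Λ m ≃ PathWord A' Λ' m :=
  .ofBijective (fun ν => ⟨f ∘ ν.1, H.isPathFrom_comp ν.2⟩)
    ⟨fun ν ν' heq => Subtype.ext <| funext fun q =>
        H.eq_of_comp_eq (congrArg Subtype.val heq) m.zero_le ν.2 ν'.2 q (Nat.zero_le _),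
      fun ν' =>
        let ⟨ν, hν, hpath⟩ := H.exists_comp_eq m.zero_le ν'.2
        ⟨⟨ν, hpath⟩, Subtype.ext hν⟩⟩

theorem adj_iff (H : IsFolding A Λ A' Λ' f) (hA : IsCartanDatum A d) (hA' : IsCartanDatum A' d')
    (j : ℕ) (h : j + 1 < m) (ν ν' : PathWord A Λ m) :
    PathWord.Adj j h ν ν' ↔ PathWord.Adj j h (H.pathWordEquiv m ν) (H.pathWordEquiv m ν') := by
  refine ⟨congrArg (f ∘ ·), fun hadj => ?_⟩
  have horth := ((H.isPathFrom_comp ν.2).swapSeq_iff hA' h j.zero_le).1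
    (hadj ▸ (H.pathWordEquiv m ν').2)
  have hpath := (ν.2.swapSeq_iff hA h j.zero_le).2 (H.apply_eq_zero hA hA' horth)
  exact funext fun q => H.eq_of_comp_eq hadj m.zero_le ν'.2 hpath q (Nat.zero_le _)

theorem nonempty_algEquiv {k : Type} [Field k] {Q : Fin n → Fin n → MvPolynomial (Fin 2) k}
    {Q' : Fin n' → Fin n' → MvPolynomial (Fin 2) k} (H : IsFolding A Λ A' Λ' f)
    (hA : IsCartanDatum A d) (hΛ : IsMinuscule A Λ) (hQ : QAdmissible k A d Q)
    (hA' : IsCartanDatum A' d') (hQ' : QAdmissible k A' d' Q') (m : ℕ) :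
    Nonempty (CyclotomicQHA k Q Λ m ≃ₐ[k] CyclotomicQHA k Q' Λ' m) :=
  CyclotomicQHA.nonempty_algEquiv hA hΛ hQ hA' (H.isMinuscule hΛ) hQ' (H.pathWordEquiv m)
    (H.adj_iff hA hA')

end IsFolding

end Folding

/-! ### Types `B` and `D` -/

theorem isCartanDatum_AB (n : ℕ) : IsCartanDatum (AB n) (dB n) where
  diag i := by simp [AB]
  nonpos {i j} hij := by
    unfold AB
    split_ifs <;> first | contradiction | omega
  pos i := by
    unfold dB
    split_ifs <;> omega
  symm i j := by
    simp only [AB, dB, Fin.ext_iff]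
    split_ifs <;> omega
  eq_neg_one_or {i j} := by
    simp only [AB, Fin.ext_iff]
    split_ifs <;> omega

theorem isCartanDatum_AD (n : ℕ) : IsCartanDatum (AD n) fun _ => 1 where
  diag i := by simp [AD]
  nonpos {i j} hij := by
    unfold AD
    split_ifs <;> first | contradiction | omega
  pos _ := one_pos
  symm i j := by
    simp only [AD, Fin.ext_iff]
    split_ifs <;> omega
  eq_neg_one_or {i j} := by
    simp only [AD, Fin.ext_iff]
    split_ifs <;> omega

/-- The pairing of `∑ t, ε t • e_t` with the `i`-th simple coroot of type `D`, in the standard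
realization of the root system in `⨁ t, ℤ e_t`: the simple roots are `e₀ + e₁` and
`e_i - e_{i - 1}` for `1 ≤ i`. -/
def corootD (ε : ℕ → ℤ) (i : ℕ) : ℤ :=
  if i = 0 then ε 0 + ε 1 else ε i - ε (i - 1)

/-- The coordinates of the `j`-th simple root of type `D` in the standard realization. -/
def rootD (j t : ℕ) : ℤ :=
  if t = j ∨ j = 0 ∧ t = 1 then 1 else if t + 1 = j then -1 else 0

/-- The weights of the two half-spin representations of type `D`: in the standard realization
they are the vectors all of whose coordinates `ε t / 2` are `±1/2`. -/
def IsSignWeight {n : ℕ} (μ : Fin n → ℤ) : Prop :=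
  ∃ ε : ℕ → ℤ, (∀ t, ε t = 1 ∨ ε t = -1) ∧ ∀ i : Fin n, 2 * μ i = corootD ε i

theorem AD_eq_corootD_rootD {n : ℕ} (i j : Fin n) : AD n i j = corootD (rootD j) i := by
  simp only [AD, corootD, rootD, Fin.ext_iff, and_true]
  split_ifs <;> omega

theorem isSignWeight_single {n : ℕ} (z : Fin n) (hz : (z : ℕ) < 2) :
    IsSignWeight (Pi.single z 1) := by
  refine ⟨fun t => if t < z then -1 else 1, fun t => by dsimp only; split_ifs <;> simp,
    fun i => ?_⟩
  simp only [Pi.single_apply, corootD, Fin.ext_iff]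
  split_ifs <;> omega

namespace IsSignWeight

variable {n : ℕ} {μ Λ : Fin n → ℤ}

theorem bounded (hμ : IsSignWeight μ) (i : Fin n) : -1 ≤ μ i ∧ μ i ≤ 1 := by
  obtain ⟨ε, hε, hμ⟩ := hμ
  have hμi := hμ i
  have h₀ := hε 0
  have h₁ := hε 1
  have hi := hε i
  have hi' := hε (i - 1)
  unfold corootD at hμi
  split_ifs at hμi <;> omega

theorem sub_αcol (hμ : IsSignWeight μ) {j : Fin n} (hj : μ j = 1) :
    IsSignWeight (μ - αcol (AD n) j) := by
  obtain ⟨ε, hε, hμ⟩ := hμ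
  refine ⟨fun t => ε t - 2 * rootD j t, fun t => ?_, fun i => ?_⟩
  · have hμj := hμ j
    have h₀ := hε 0
    have h₁ := hε 1
    have ht := hε t
    have hj₀ := hε j
    have hj₁ := hε (j - 1)
    simp only [corootD, rootD] at hμj ⊢
    grind
  · rw [Pi.sub_apply, αcol, AD_eq_corootD_rootD, mul_sub, hμ i]
    unfold corootD
    split_ifs <;> ring

theorem of_fPath (hΛ : IsSignWeight Λ) {l : List (Fin n)} {ξ : Fin n → ℤ}
    (h : FPath (AD n) Λ l ξ) : IsSignWeight ξ := by
  induction h with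
  | nil => exact hΛ
  | cons j _ ξ _ hj ih => exact ih.sub_αcol hj

end IsSignWeight

theorem isMinuscule_single {n : ℕ} (z : Fin n) (hz : (z : ℕ) < 2) :
    IsMinuscule (AD n) (Pi.single z 1) where
  dominant := (Pi.single_nonneg (α := fun _ => ℤ)).2 zero_le_one
  bounded h := ((isSignWeight_single z hz).of_fPath h).bounded

/-- The folding of the Dynkin diagram of type `D` identifying its two end nodes `0` and `1`. -/
def foldD (n : ℕ) : Fin (n + 2) → Fin (n + 1) :=
  Fin.predAbove 0

theorem foldD_zero (n : ℕ) : foldD n 0 = 0 :=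
  Fin.predAbove_right_zero

theorem foldD_succ {n : ℕ} (i : Fin (n + 1)) : foldD n i.succ = i :=
  Fin.predAbove_zero_succ

theorem coe_foldD {n : ℕ} (a : Fin (n + 2)) : (foldD n a : ℕ) = a - 1 := by
  cases a using Fin.cases with
  | zero => rw [foldD_zero]; rfl
  | succ i => rw [foldD_succ]; rfl

theorem foldWeight_foldD_apply {n : ℕ} (μ : Fin (n + 2) → ℤ) (i : Fin (n + 1)) :
    foldWeight (foldD n) μ i = (if i = 0 then μ 0 else 0) + μ i.succ := by
  rw [FunOnFinite.linearMap_apply_apply, Finset.sum_filter, Fin.sum_univ_succ]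
  simp [foldD_zero, foldD_succ, eq_comm]

theorem foldWeight_foldD_αcol {n : ℕ} (a : Fin (n + 2)) :
    foldWeight (foldD n) (αcol (AD (n + 2)) a) = αcol (AB (n + 1)) (foldD n a) := by
  funext i
  rw [foldWeight_foldD_apply]
  grind (splits := 30) [αcol, AD, AB, coe_foldD]

theorem IsSignWeight.injOn_foldD {n : ℕ} {μ : Fin (n + 2) → ℤ} (hμ : IsSignWeight μ) :
    Set.InjOn (foldD n) (Function.support μ) := by
  obtain ⟨ε, hε, hμ⟩ := hμ
  have hμ₀₁ : μ 0 = 0 ∨ μ 1 = 0 := by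
    have h₀ : 2 * μ 0 = ε 0 + ε 1 := hμ 0
    have h₁ : 2 * μ 1 = ε 1 - ε 0 := hμ 1
    have hε₀ := hε 0
    have hε₁ := hε 1
    omega
  intro a ha b hb hab
  cases a using Fin.cases <;> cases b using Fin.cases <;>
    simp only [foldD_zero, foldD_succ] at hab
  · rfl
  · subst hab
    simp_all
  · subst hab
    simp_all
  · rw [hab]

theorem isFolding_foldD {n : ℕ} (z : Fin (n + 2)) (hz : (z : ℕ) < 2) :
    IsFolding (AD (n + 2)) (Pi.single z 1) (AB (n + 1)) (Pi.single 0 1) (foldD n) where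
  surjective i := ⟨i.succ, foldD_succ i⟩
  foldWeight_αcol := foldWeight_foldD_αcol
  foldWeight_eq := by
    have hz0 : foldD n z = 0 := Fin.ext (by rw [coe_foldD, Fin.val_zero]; omega)
    rw [foldWeight, FunOnFinite.linearMap_piSingle, hz0]
  injOn h := ((isSignWeight_single z hz).of_fPath h).injOn_foldD

theorem cyclotomic_QHA_iso_B_D
    (k : Type) [Field k] (n : ℕ) (hn : 2 ≤ n) (m : ℕ)
    (QB : Fin n → Fin n → MvPolynomial (Fin 2) k)
    (hQB : QAdmissible k (AB n) (dB n) QB)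
    (QD : Fin (n + 1) → Fin (n + 1) → MvPolynomial (Fin 2) k)
    (hQD : QAdmissible k (AD (n + 1)) (fun _ => 1) QD) :
    -- R^{Λ₁}_{Bₙ}(m) ≅ R^{Λ₁}_{D_{n+1}}(m)
    Nonempty
      ((RingQuot (CRel k QB (Set.univ : Set (Fin m → Fin n))
          (Pi.single ⟨0, by omega⟩ 1))) ≃ₐ[k]
        (RingQuot (CRel k QD (Set.univ : Set (Fin m → Fin (n + 1)))
          (Pi.single ⟨0, by omega⟩ 1)))) ∧
    -- R^{Λ₁}_{D_{n+1}}(m) ≅ R^{Λ₂}_{D_{n+1}}(m)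
    Nonempty
      ((RingQuot (CRel k QD (Set.univ : Set (Fin m → Fin (n + 1)))
          (Pi.single ⟨0, by omega⟩ 1))) ≃ₐ[k]
        (RingQuot (CRel k QD (Set.univ : Set (Fin m → Fin (n + 1)))
          (Pi.single ⟨1, by omega⟩ 1)))) := by
  obtain ⟨N, rfl⟩ : ∃ N, n = N + 1 := ⟨n - 1, by omega⟩
  have iso (z : Fin (N + 2)) (hz : (z : ℕ) < 2) :
      Nonempty (CyclotomicQHA k QD (Pi.single z 1) m ≃ₐ[k]
        CyclotomicQHA k QB (Pi.single 0 1) m) :=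
    (isFolding_foldD z hz).nonempty_algEquiv (isCartanDatum_AD _) (isMinuscule_single z hz) hQD
      (isCartanDatum_AB _) hQB m
  obtain ⟨φ⟩ := iso ⟨0, by omega⟩ zero_lt_two
  obtain ⟨ψ⟩ := iso ⟨1, by omega⟩ one_lt_two
  exact ⟨⟨φ.symm⟩, ⟨φ.trans ψ.symm⟩⟩

end QHA
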